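/- arXiv:2304.10696 — 5 statements merged into one kernel-verified Lean document; each statement's English description precedes it below -/
import Mathlib

section
/- Let N be a positive integer and let Q_N be the quadratic form on the 3-dimensional ℚ-vector space ℚ³ given by Q_N(a, b, c) = −N·a² − b·c (the restriction of the determinant form to the matrices [[−Na, b], [c, a]]). Let e₁, e₂, e₃ be the standard basis of ℚ³ and ι : ℚ³ → CliffordAlgebra Q_N the canonical embedding. Then there is a ℚ-algebra isomorphism from the even Clifford algebra of Q_N onto the matrix algebra M₂(ℚ) sending ι(e₁)ι(e₂) to [[0,1],[0,0]], ι(e₁)ι(e₃) to [[0,0],[−N,0]], and ι(e₂)ι(e₃) to [[−1,0],[0,0]]; moreover this isomorphism carries the restriction to the even part of the reversal anti-automorphism of CliffordAlgebra Q_N to the adjugate involution g ↦ adjugate(g) of M₂(ℚ). -/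
open CliffordAlgebra

/-- The quadratic form `Q_N(a, b, c) = -N·a² - b·c` on `ℚ³`, the determinant form on the
space of matrices `[[-Na, b], [c, a]]`. -/
noncomputable def QN (N : ℕ) : QuadraticForm ℚ (Fin 3 → ℚ) :=
  Matrix.toQuadraticMap' !![-(N : ℚ), 0, 0; 0, 0, -1; 0, 0, 0]

theorem QN_apply (N : ℕ) (v : Fin 3 → ℚ) : QN N v = -(N : ℚ) * v 0 ^ 2 - v 1 * v 2 := by
  simp only [QN, Matrix.toQuadraticMap', Matrix.toQuadraticForm', LinearMap.BilinMap.toQuadraticMap_apply,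
    Matrix.toLinearMap₂'_apply]
  simp [Fin.sum_univ_three]
  ring

/-- The even hom into matrices. -/
noncomputable def fBil (N : ℕ) : EvenHom (QN N) (Matrix (Fin 2) (Fin 2) ℚ) where
  bilin := LinearMap.mk₂ ℚ (fun m n =>
      !![-(N : ℚ) * m 0 * n 0 - m 1 * n 2, m 0 * n 1 - m 1 * n 0;
        -(N : ℚ) * (m 0 * n 2 - m 2 * n 0), -(N : ℚ) * m 0 * n 0 - m 2 * n 1])
      (fun _ _ _ => by ext i j; fin_cases i <;> fin_cases j <;> simp <;> ring)
      (fun _ _ _ => by ext i j; fin_cases i <;> fin_cases j <;> simp <;> ring)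
      (fun _ _ _ => by ext i j; fin_cases i <;> fin_cases j <;> simp <;> ring)
      (fun _ _ _ => by ext i j; fin_cases i <;> fin_cases j <;> simp <;> ring)
  contract m := by
    ext i j
    fin_cases i <;> fin_cases j <;>
      simp [QN_apply, Matrix.algebraMap_matrix_apply] <;> ring_nf <;> simp
  contract_mid m₁ m₂ m₃ := by
    ext i j
    fin_cases i <;> fin_cases j <;>
      simp [QN_apply, Matrix.mul_apply, Fin.sum_univ_two] <;> ring

theorem polar_rel (N : ℕ) (u v : Fin 3 → ℚ) :
    ι (QN N) u * ι (QN N) v = algebraMap ℚ _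
      (-(2 * N : ℚ) * u 0 * v 0 - u 1 * v 2 - u 2 * v 1) - ι (QN N) v * ι (QN N) u := by
  rw [eq_sub_iff_add_eq, ι_mul_ι_add_swap]
  congr 1
  simp [QuadraticMap.polar, QN_apply]
  ring

/-- basis vectors -/
noncomputable abbrev ee (N : ℕ) (i : Fin 3) : CliffordAlgebra (QN N) := ι (QN N) (Pi.single i 1)

theorem e00 (N : ℕ) : ee N 0 * ee N 0 = -(N : ℚ) • 1 := by
  rw [ι_sq_scalar, Algebra.algebraMap_eq_smul_one]; simp [QN_apply]
theorem e11 (N : ℕ) : ee N 1 * ee N 1 = 0 := by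
  rw [ι_sq_scalar]; simp [QN_apply]
theorem e22 (N : ℕ) : ee N 2 * ee N 2 = 0 := by
  rw [ι_sq_scalar]; simp [QN_apply]
theorem e10 (N : ℕ) : ee N 1 * ee N 0 = - (ee N 0 * ee N 1) := by
  rw [polar_rel]; simp
theorem e20 (N : ℕ) : ee N 2 * ee N 0 = - (ee N 0 * ee N 2) := by
  rw [polar_rel]; simp
theorem e21 (N : ℕ) : ee N 2 * ee N 1 = - 1 - (ee N 1 * ee N 2) := by
  rw [polar_rel]; simp

theorem ι_eq (N : ℕ) (v : Fin 3 → ℚ) :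
    ι (QN N) v = v 0 • ee N 0 + v 1 • ee N 1 + v 2 • ee N 2 := by
  simp only [ee, ← map_smul, ← map_add]
  congr 1
  ext i
  fin_cases i <;> simp

/-- underlying values of the inverse -/
noncomputable def gVal (N : ℕ) (m : Matrix (Fin 2) (Fin 2) ℚ) : CliffordAlgebra (QN N) :=
  (m 1 1) • 1 + (m 1 1 - m 0 0) • (ee N 1 * ee N 2) + m 0 1 • (ee N 0 * ee N 1)
    + (-(N : ℚ)⁻¹ * m 1 0) • (ee N 0 * ee N 2)

theorem gVal_mem (N : ℕ) (m) : gVal N m ∈ even (QN N) := by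
  have h : ∀ i j, ee N i * ee N j ∈ even (QN N) := fun i j => ι_mul_ι_mem_evenOdd_zero _ _ _
  unfold gVal
  exact add_mem (add_mem (add_mem (Subalgebra.smul_mem _ (one_mem _) _)
    (Subalgebra.smul_mem _ (h _ _) _)) (Subalgebra.smul_mem _ (h _ _) _))
    (Subalgebra.smul_mem _ (h _ _) _)

theorem alg_mul {A : Type*} [Ring A] [Algebra ℚ A] (n : ℚ) (hn : n ≠ 0) (x y z : A)
    (xx : x * x = -n • 1) (yy : y * y = 0) (zz : z * z = 0) (yx : y * x = -(x * y))
    (zx : z * x = -(x * z)) (zy : z * y = -1 - y * z) (a b c d a' b' c' d' : ℚ) :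
    (d • 1 + (d - a) • (y * z) + b • (x * y) + (-n⁻¹ * c) • (x * z)) *
    (d' • 1 + (d' - a') • (y * z) + b' • (x * y) + (-n⁻¹ * c') • (x * z)) =
    ((c * b' + d * d') • 1 + ((c * b' + d * d') - (a * a' + b * c')) • (y * z)
      + (a * b' + b * d') • (x * y) + (-n⁻¹ * (c * a' + d * c')) • (x * z)) := by
  have xx' : ∀ w, x * (x * w) = -n • w := fun w => by rw [← mul_assoc, xx]; simp
  have yy' : ∀ w, y * (y * w) = 0 := fun w => by rw [← mul_assoc, yy]; simp
  have zz' : ∀ w, z * (z * w) = 0 := fun w => by rw [← mul_assoc, zz]; simp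
  have yx' : ∀ w, y * (x * w) = -(x * (y * w)) := fun w => by rw [← mul_assoc, yx]; simp [mul_assoc]
  have zx' : ∀ w, z * (x * w) = -(x * (z * w)) := fun w => by rw [← mul_assoc, zx]; simp [mul_assoc]
  have zy' : ∀ w, z * (y * w) = -w - y * (z * w) := fun w => by
    rw [← mul_assoc, zy]; simp [mul_assoc, sub_mul]
  simp only [mul_add, add_mul, smul_mul_assoc, mul_smul_comm, mul_assoc, mul_one, one_mul,
    xx, yy, zz, yx, zx, zy, xx', yy', zz', yx', zx', zy', mul_neg, mul_sub, mul_zero, smul_zero,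
    neg_zero, sub_zero, smul_neg, neg_neg, zero_sub]
  match_scalars <;> field_simp <;> ring

/-- inverse -/
noncomputable def gHom (N : ℕ) (hN : 0 < N) : Matrix (Fin 2) (Fin 2) ℚ →ₐ[ℚ] even (QN N) :=
  AlgHom.ofLinearMap
    { toFun := fun m => ⟨gVal N m, gVal_mem N m⟩
      map_add' := fun m n => Subtype.ext (by
        simp only [gVal, Matrix.add_apply, Subalgebra.coe_add]; module)
      map_smul' := fun r m => Subtype.ext (by
        simp only [gVal, Matrix.smul_apply, Subalgebra.coe_smul, smul_eq_mul, RingHom.id_apply]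
        module) }
    (Subtype.ext (by simp [gVal]))
    (fun m n => Subtype.ext (by
      have := alg_mul (N : ℚ) (by positivity) _ _ _ (e00 N) (e11 N) (e22 N) (e10 N) (e20 N) (e21 N)
        (m 0 0) (m 0 1) (m 1 0) (m 1 1) (n 0 0) (n 0 1) (n 1 0) (n 1 1)
      simp only [LinearMap.coe_mk, AddHom.coe_mk, Subalgebra.coe_mul, gVal, Matrix.mul_apply,
        Fin.sum_univ_two]
      exact this.symm))

theorem gHom_coe (N : ℕ) (hN : 0 < N) (m) : (gHom N hN m : CliffordAlgebra (QN N)) = gVal N m := rfl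

theorem gVal_fBil (N : ℕ) (hN : 0 < N) (u v : Fin 3 → ℚ) :
    gVal N ((fBil N).bilin u v) = ι (QN N) u * ι (QN N) v := by
  have hN' : (N : ℚ) ≠ 0 := by positivity
  rw [ι_eq N u, ι_eq N v]
  simp only [mul_add, add_mul, smul_mul_assoc, mul_smul_comm, e00, e11, e22, e10, e20, e21]
  simp only [gVal, fBil, LinearMap.mk₂_apply, Matrix.of_apply, Matrix.cons_val', Matrix.cons_val_zero,
    Matrix.cons_val_one, Matrix.cons_val_fin_one]
  match_scalars <;> field_simp <;> ring

theorem lift_coe (N : ℕ) (x : even (QN N)) (u v : Fin 3 → ℚ)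
    (h : (x : CliffordAlgebra (QN N)) = ι (QN N) u * ι (QN N) v) :
    even.lift (QN N) (fBil N) x = (fBil N).bilin u v := by
  rw [← even.lift_ι]
  congr 1
  exact Subtype.ext h

theorem gf (N : ℕ) (hN : 0 < N) :
    (gHom N hN).comp (even.lift (QN N) (fBil N)) = AlgHom.id ℚ _ := by
  apply even.algHom_ext
  apply EvenHom.ext
  refine LinearMap.ext₂ fun u v => ?_
  change gHom N hN (even.lift (QN N) (fBil N) ((even.ι (QN N)).bilin u v)) = (even.ι (QN N)).bilin u v
  rw [even.lift_ι]
  exact Subtype.ext (gVal_fBil N hN u v)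

theorem fg (N : ℕ) (hN : 0 < N) :
    (even.lift (QN N) (fBil N)).comp (gHom N hN) = AlgHom.id ℚ _ := by
  have hN' : (N : ℚ) ≠ 0 := by positivity
  ext1 m
  have h : gHom N hN m = (m 1 1) • 1
      + (m 1 1 - m 0 0) • ((even.ι (QN N)).bilin (Pi.single 1 1) (Pi.single 2 1))
      + m 0 1 • ((even.ι (QN N)).bilin (Pi.single 0 1) (Pi.single 1 1))
      + (-(N : ℚ)⁻¹ * m 1 0) • ((even.ι (QN N)).bilin (Pi.single 0 1) (Pi.single 2 1)) :=
    Subtype.ext rfl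
  rw [AlgHom.comp_apply, h]
  simp only [map_add, map_smul, even.lift_ι, map_one]
  ext i j
  fin_cases i <;> fin_cases j <;> simp [fBil] <;> field_simp

theorem reverse_gVal (N : ℕ) (m) : reverse (gVal N m) = gVal N m.adjugate := by
  simp only [gVal, map_add, map_smul, reverse.map_one, reverse.map_mul, reverse_ι, e10, e20, e21,
    Matrix.adjugate_fin_two]
  simp only [Matrix.of_apply, Matrix.cons_val', Matrix.cons_val_zero,
    Matrix.cons_val_one, Matrix.cons_val_fin_one]
  module

/-- For a positive integer `N`, there is a `ℚ`-algebra isomorphism from the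
even Clifford algebra of `Q_N` onto `M₂(ℚ)` sending `ι(e₁)ι(e₂) ↦ [[0,1],[0,0]]`,
`ι(e₁)ι(e₃) ↦ [[0,0],[-N,0]]`, `ι(e₂)ι(e₃) ↦ [[-1,0],[0,0]]`, and carrying the restriction of
the reversal anti-automorphism to the adjugate involution `g ↦ adjugate g` of `M₂(ℚ)`. -/
theorem statement12 (N : ℕ) (hN : 0 < N) :
    ∃ iso : (CliffordAlgebra.even (QN N)) ≃ₐ[ℚ] Matrix (Fin 2) (Fin 2) ℚ,
      (∀ x : CliffordAlgebra.even (QN N),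
        (x : CliffordAlgebra (QN N)) =
            ι (QN N) (Pi.single 0 1) * ι (QN N) (Pi.single 1 1) →
          iso x = !![0, 1; 0, 0]) ∧
      (∀ x : CliffordAlgebra.even (QN N),
        (x : CliffordAlgebra (QN N)) =
            ι (QN N) (Pi.single 0 1) * ι (QN N) (Pi.single 2 1) →
          iso x = !![0, 0; -(N : ℚ), 0]) ∧
      (∀ x : CliffordAlgebra.even (QN N),
        (x : CliffordAlgebra (QN N)) =
            ι (QN N) (Pi.single 1 1) * ι (QN N) (Pi.single 2 1) →
          iso x = !![-1, 0; 0, 0]) ∧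
      (∀ x y : CliffordAlgebra.even (QN N),
        (y : CliffordAlgebra (QN N)) = reverse (Q := QN N) (x : CliffordAlgebra (QN N)) →
          iso y = (iso x).adjugate) := by
  refine ⟨AlgEquiv.ofAlgHom _ _ (fg N hN) (gf N hN), ?_, ?_, ?_, ?_⟩
  · intro x hx
    refine (lift_coe N x _ _ hx).trans ?_
    ext i j
    fin_cases i <;> fin_cases j <;> simp [fBil]
  · intro x hx
    refine (lift_coe N x _ _ hx).trans ?_
    ext i j
    fin_cases i <;> fin_cases j <;> simp [fBil]
  · intro x hx
    refine (lift_coe N x _ _ hx).trans ?_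
    ext i j
    fin_cases i <;> fin_cases j <;> simp [fBil]
  · intro x y hy
    set iso := AlgEquiv.ofAlgHom _ _ (fg N hN) (gf N hN) with hiso
    have hx : (x : CliffordAlgebra (QN N)) = gVal N (iso x) :=
      congrArg Subtype.val (iso.symm_apply_apply x).symm
    rw [hx, reverse_gVal] at hy
    have : y = iso.symm (iso x).adjugate := Subtype.ext hy
    rw [this, iso.apply_symm_apply]
end

section
/- Let Q_det be the determinant quadratic form on the 4-dimensional ℚ-vector space M₂(ℚ) of 2×2 matrices (Q_det(x) = det(x)). Then the even Clifford algebra of Q_det is isomorphic as a ℚ-algebra to the product M₂(ℚ) × M₂(ℚ). -/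
/-- The determinant of a `2 × 2` matrix as a quadratic form, `Q_det(x) = det x`. -/
noncomputable def detForm (O : Type*) [CommRing O] :
    QuadraticForm O (Matrix (Fin 2) (Fin 2) O) :=
  QuadraticMap.ofPolar (fun x => x.det)
    (fun a x => by simp [Matrix.det_fin_two, smul_eq_mul]; ring)
    (fun x x' y => by simp [QuadraticMap.polar, Matrix.det_fin_two]; ring)
    (fun a x y => by simp [QuadraticMap.polar, Matrix.det_fin_two, smul_eq_mul]; ring)

set_option linter.unusedSimpArgs false

namespace EvenDet

/-- candidate linear map `M₂ × M₂ → R` built from four elements -/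
noncomputable def gfun {R : Type*} [Ring R] [Algebra ℚ R] (A B C D : R)
    (p : Matrix (Fin 2) (Fin 2) ℚ × Matrix (Fin 2) (Fin 2) ℚ) : R :=
  -(p.1 0 0 • (A * B * C * D)) - p.1 0 1 • (A * C) - p.1 1 0 • (B * D)
    - p.1 1 1 • (B * A * D * C) - p.2 0 0 • (B * A * C * D) + p.2 0 1 • (B * C)
    + p.2 1 0 • (A * D) - p.2 1 1 • (A * B * D * C)


theorem gfun_mul {R : Type*} [Ring R] [Algebra ℚ R] {A B C D : R}
    (hA : A * A = 0) (hB : B * B = 0) (hC : C * C = 0) (hD : D * D = 0)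
    (hBA : B * A = 1 - A * B) (hDC : D * C = -1 - C * D)
    (hCA : C * A = -(A * C)) (hDA : D * A = -(A * D))
    (hCB : C * B = -(B * C)) (hDB : D * B = -(B * D))
    (p q : Matrix (Fin 2) (Fin 2) ℚ × Matrix (Fin 2) (Fin 2) ℚ) :
    gfun A B C D (p * q) = gfun A B C D p * gfun A B C D q := by
  have hAx : ∀ X : R, A * (A * X) = 0 := fun X => by
    rw [← mul_assoc, hA]; noncomm_ring
  have hBx : ∀ X : R, B * (B * X) = 0 := fun X => by
    rw [← mul_assoc, hB]; noncomm_ring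
  have hCx : ∀ X : R, C * (C * X) = 0 := fun X => by
    rw [← mul_assoc, hC]; noncomm_ring
  have hDx : ∀ X : R, D * (D * X) = 0 := fun X => by
    rw [← mul_assoc, hD]; noncomm_ring
  have hBAx : ∀ X : R, B * (A * X) = X - A * (B * X) := fun X => by
    rw [← mul_assoc, hBA]; noncomm_ring
  have hDCx : ∀ X : R, D * (C * X) = -X - C * (D * X) := fun X => by
    rw [← mul_assoc, hDC]; noncomm_ring
  have hCAx : ∀ X : R, C * (A * X) = -(A * (C * X)) := fun X => by
    rw [← mul_assoc, hCA]; noncomm_ring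
  have hDAx : ∀ X : R, D * (A * X) = -(A * (D * X)) := fun X => by
    rw [← mul_assoc, hDA]; noncomm_ring
  have hCBx : ∀ X : R, C * (B * X) = -(B * (C * X)) := fun X => by
    rw [← mul_assoc, hCB]; noncomm_ring
  have hDBx : ∀ X : R, D * (B * X) = -(B * (D * X)) := fun X => by
    rw [← mul_assoc, hDB]; noncomm_ring
  simp only [gfun, Prod.fst_mul, Prod.snd_mul, Matrix.mul_apply, Fin.sum_univ_two,
    mul_add, add_mul, mul_sub, sub_mul, neg_mul, mul_neg, smul_mul_assoc, mul_smul_comm, mul_assoc,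
    mul_one, one_mul, mul_zero, zero_mul, neg_neg, neg_zero, smul_zero, sub_zero, zero_sub,
    hA, hAx, hB, hBx, hC, hCx, hD, hDx, hBA, hBAx, hDC, hDCx, hCA, hCAx, hDA, hDAx, hCB, hCBx, hDB, hDBx]
  module

theorem gfun_one {R : Type*} [Ring R] [Algebra ℚ R] {A B C D : R}
    (hBA : B * A = 1 - A * B) (hDC : D * C = -1 - C * D) :
    gfun A B C D 1 = 1 := by
  simp [gfun, hBA, hDC, mul_assoc, mul_sub, sub_mul]
  abel

theorem gfun_ev {R : Type*} [Ring R] [Algebra ℚ R] {A B C D : R}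
    (hA : A * A = 0) (hB : B * B = 0) (hC : C * C = 0) (hD : D * D = 0)
    (hBA : B * A = 1 - A * B) (hDC : D * C = -1 - C * D)
    (hCA : C * A = -(A * C)) (hDA : D * A = -(A * D))
    (hCB : C * B = -(B * C)) (hDB : D * B = -(B * D))
    (x y : Matrix (Fin 2) (Fin 2) ℚ) :
    gfun A B C D (x * y.adjugate, x.adjugate * y) =
      (x 0 0 • A + x 1 1 • B + x 0 1 • C + x 1 0 • D) *
      (y 0 0 • A + y 1 1 • B + y 0 1 • C + y 1 0 • D) := by
  have hAx : ∀ X : R, A * (A * X) = 0 := fun X => by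
    rw [← mul_assoc, hA]; noncomm_ring
  have hBx : ∀ X : R, B * (B * X) = 0 := fun X => by
    rw [← mul_assoc, hB]; noncomm_ring
  have hCx : ∀ X : R, C * (C * X) = 0 := fun X => by
    rw [← mul_assoc, hC]; noncomm_ring
  have hDx : ∀ X : R, D * (D * X) = 0 := fun X => by
    rw [← mul_assoc, hD]; noncomm_ring
  have hBAx : ∀ X : R, B * (A * X) = X - A * (B * X) := fun X => by
    rw [← mul_assoc, hBA]; noncomm_ring
  have hDCx : ∀ X : R, D * (C * X) = -X - C * (D * X) := fun X => by
    rw [← mul_assoc, hDC]; noncomm_ring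
  have hCAx : ∀ X : R, C * (A * X) = -(A * (C * X)) := fun X => by
    rw [← mul_assoc, hCA]; noncomm_ring
  have hDAx : ∀ X : R, D * (A * X) = -(A * (D * X)) := fun X => by
    rw [← mul_assoc, hDA]; noncomm_ring
  have hCBx : ∀ X : R, C * (B * X) = -(B * (C * X)) := fun X => by
    rw [← mul_assoc, hCB]; noncomm_ring
  have hDBx : ∀ X : R, D * (B * X) = -(B * (D * X)) := fun X => by
    rw [← mul_assoc, hDB]; noncomm_ring
  simp only [gfun, Matrix.adjugate_fin_two, Matrix.mul_apply, Fin.sum_univ_two, Matrix.of_apply,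
    Matrix.cons_val_zero, Matrix.cons_val_one, Matrix.cons_val', Matrix.cons_val_fin_one,
    mul_add, add_mul, mul_sub, sub_mul, neg_mul, mul_neg, smul_mul_assoc, mul_smul_comm, mul_assoc,
    mul_one, one_mul, mul_zero, zero_mul, neg_neg, neg_zero, smul_zero, sub_zero, zero_sub,
    hA, hAx, hB, hBx, hC, hCx, hD, hDx, hBA, hBAx, hDC, hDCx, hCA, hCAx, hDA, hDAx, hCB, hCBx, hDB, hDBx]
  module

/-- `gfun` as an algebra homomorphism -/
noncomputable def gHom {R : Type*} [Ring R] [Algebra ℚ R] {A B C D : R}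
    (hA : A * A = 0) (hB : B * B = 0) (hC : C * C = 0) (hD : D * D = 0)
    (hBA : B * A = 1 - A * B) (hDC : D * C = -1 - C * D)
    (hCA : C * A = -(A * C)) (hDA : D * A = -(A * D))
    (hCB : C * B = -(B * C)) (hDB : D * B = -(B * D)) :
    (Matrix (Fin 2) (Fin 2) ℚ × Matrix (Fin 2) (Fin 2) ℚ) →ₐ[ℚ] R :=
  AlgHom.ofLinearMap
    { toFun := gfun A B C D
      map_add' := fun p q => by simp [gfun]; module
      map_smul' := fun r p => by simp [gfun]; module }
    (gfun_one hBA hDC) (gfun_mul hA hB hC hD hBA hDC hCA hDA hCB hDB)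

open CliffordAlgebra

abbrev M := Matrix (Fin 2) (Fin 2) ℚ

theorem detForm_apply (x : M) : detForm ℚ x = x.det := rfl

/-- `(x, y) ↦ (x adj y, adj x y)` -/
noncomputable def evHom : EvenHom (detForm ℚ) (M × M) where
  bilin := LinearMap.mk₂ ℚ (fun x y => (x * y.adjugate, x.adjugate * y))
    (fun x x' y => by ext i j <;> fin_cases i <;> fin_cases j <;> simp [Matrix.adjugate_fin_two, Matrix.mul_apply, Fin.sum_univ_two, -Matrix.cons_mul] <;> ring)
    (fun r x y => by ext i j <;> fin_cases i <;> fin_cases j <;> simp [Matrix.adjugate_fin_two, Matrix.mul_apply, Fin.sum_univ_two, -Matrix.cons_mul] <;> ring)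
    (fun x x' y => by ext i j <;> fin_cases i <;> fin_cases j <;> simp [Matrix.adjugate_fin_two, Matrix.mul_apply, Fin.sum_univ_two, -Matrix.cons_mul] <;> ring)
    (fun r x y => by ext i j <;> fin_cases i <;> fin_cases j <;> simp [Matrix.adjugate_fin_two, Matrix.mul_apply, Fin.sum_univ_two, -Matrix.cons_mul] <;> ring)
  contract m := by
    ext i j <;> fin_cases i <;> fin_cases j <;> simp [detForm_apply, Matrix.mul_adjugate, Matrix.adjugate_mul, Matrix.algebraMap_matrix_apply]
  contract_mid m₁ m₂ m₃ := by
    ext i j <;> fin_cases i <;> fin_cases j <;> simp [detForm_apply, Matrix.det_fin_two, Matrix.adjugate_fin_two, Matrix.mul_apply, Fin.sum_univ_two, -Matrix.cons_mul] <;> ring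

theorem evHom_apply (x y : M) : evHom.bilin x y = (x * y.adjugate, x.adjugate * y) := rfl

noncomputable abbrev e (i j : Fin 2) : CliffordAlgebra (detForm ℚ) := ι (detForm ℚ) (Matrix.single i j 1)

theorem rel (x y : M) (r : ℚ) (h : (x + y).det - x.det - y.det = r) :
    ι (detForm ℚ) x * ι (detForm ℚ) y = algebraMap ℚ _ r - ι (detForm ℚ) y * ι (detForm ℚ) x := by
  rw [eq_sub_iff_add_eq, ι_mul_ι_add_swap, ← h]; rfl

theorem sq (x : M) (h : x.det = 0) : ι (detForm ℚ) x * ι (detForm ℚ) x = 0 := by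
  rw [ι_sq_scalar, detForm_apply, h, map_zero]

theorem h00 : e 0 0 * e 0 0 = 0 := sq _ (by simp [Matrix.det_fin_two])
theorem h11 : e 1 1 * e 1 1 = 0 := sq _ (by simp [Matrix.det_fin_two])
theorem h01 : e 0 1 * e 0 1 = 0 := sq _ (by simp [Matrix.det_fin_two])
theorem h10 : e 1 0 * e 1 0 = 0 := sq _ (by simp [Matrix.det_fin_two])
theorem hBA : e 1 1 * e 0 0 = 1 - e 0 0 * e 1 1 := by
  rw [rel _ _ 1 (by simp [Matrix.det_fin_two]), map_one]
theorem hDC : e 1 0 * e 0 1 = -1 - e 0 1 * e 1 0 := by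
  rw [rel _ _ (-1) (by simp [Matrix.det_fin_two]), map_neg, map_one]
theorem hCA : e 0 1 * e 0 0 = -(e 0 0 * e 0 1) := by
  rw [rel _ _ 0 (by simp [Matrix.det_fin_two]), map_zero, zero_sub]
theorem hDA : e 1 0 * e 0 0 = -(e 0 0 * e 1 0) := by
  rw [rel _ _ 0 (by simp [Matrix.det_fin_two]), map_zero, zero_sub]
theorem hCB : e 0 1 * e 1 1 = -(e 1 1 * e 0 1) := by
  rw [rel _ _ 0 (by simp [Matrix.det_fin_two]), map_zero, zero_sub]
theorem hDB : e 1 0 * e 1 1 = -(e 1 1 * e 1 0) := by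
  rw [rel _ _ 0 (by simp [Matrix.det_fin_two]), map_zero, zero_sub]

noncomputable def G : M × M →ₐ[ℚ] CliffordAlgebra (detForm ℚ) :=
  gHom h00 h11 h01 h10 hBA hDC hCA hDA hCB hDB

theorem G_apply (p : M × M) : G p = gfun (e 0 0) (e 1 1) (e 0 1) (e 1 0) p := rfl

theorem ι_eq (x : M) : ι (detForm ℚ) x =
    x 0 0 • e 0 0 + x 1 1 • e 1 1 + x 0 1 • e 0 1 + x 1 0 • e 1 0 := by
  simp only [e, ← map_smul, ← map_add]
  congr 1
  ext i j; fin_cases i <;> fin_cases j <;> simp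

theorem G_ev (x y : M) : G (evHom.bilin x y) = ι (detForm ℚ) x * ι (detForm ℚ) y := by
  rw [ι_eq x, ι_eq y, G_apply, evHom_apply]
  have := gfun_ev h00 h11 h01 h10 hBA hDC hCA hDA hCB hDB x y
  exact this

noncomputable def F : even (detForm ℚ) →ₐ[ℚ] M × M := even.lift (detForm ℚ) evHom

theorem G_F (x : even (detForm ℚ)) : G (F x) = x := by
  have : G.comp F = (even (detForm ℚ)).val := by
    apply even.algHom_ext
    ext1
    refine LinearMap.ext₂ fun x y => ?_
    change G (F ((even.ι (detForm ℚ)).bilin x y)) = ι (detForm ℚ) x * ι (detForm ℚ) y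
    rw [F, even.lift_ι, G_ev]
  exact DFunLike.congr_fun this x

theorem F_inj : Function.Injective F := fun x y h => by
  apply Subtype.ext
  rw [← G_F x, ← G_F y, h]

noncomputable abbrev b (i j k l : Fin 2) : even (detForm ℚ) :=
  (even.ι (detForm ℚ)).bilin (Matrix.single i j 1) (Matrix.single k l 1)

theorem F_b (i j k l : Fin 2) : F (b i j k l) =
    (Matrix.single i j 1 * (Matrix.single k l 1 : M).adjugate,
      (Matrix.single i j 1 : M).adjugate * Matrix.single k l 1) := by
  rw [F, even.lift_ι, evHom_apply]

theorem F_surj : Function.Surjective F := fun p => by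
  refine ⟨-(p.1 0 0 • (b 0 0 1 1 * b 0 1 1 0)) - p.1 0 1 • b 0 0 0 1 - p.1 1 0 • b 1 1 1 0
    - p.1 1 1 • (b 1 1 0 0 * b 1 0 0 1) - p.2 0 0 • (b 1 1 0 0 * b 0 1 1 0) + p.2 0 1 • b 1 1 0 1
    + p.2 1 0 • b 0 0 1 0 - p.2 1 1 • (b 0 0 1 1 * b 1 0 0 1), ?_⟩
  simp only [map_add, map_sub, map_neg, map_smul, map_mul, F_b]
  ext i j <;> fin_cases i <;> fin_cases j <;>
    simp [Matrix.adjugate_fin_two, Matrix.mul_apply, Fin.sum_univ_two, -Matrix.cons_mul]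

end EvenDet

/-- The even Clifford algebra of the determinant quadratic form on the
4-dimensional `ℚ`-vector space `M₂(ℚ)` is isomorphic, as a `ℚ`-algebra, to
`M₂(ℚ) × M₂(ℚ)`. -/
theorem statement13 :
    Nonempty ((CliffordAlgebra.even (detForm ℚ)) ≃ₐ[ℚ]
      (Matrix (Fin 2) (Fin 2) ℚ × Matrix (Fin 2) (Fin 2) ℚ)) := by
  exact ⟨AlgEquiv.ofBijective EvenDet.F ⟨EvenDet.F_inj, EvenDet.F_surj⟩⟩
end

section
/- Let p be an odd prime and k ≥ 1 an integer. In the polynomial ring 𝔽_p[t₁, t₂], the element (t₁ − t₂)^{p^k} · ∏_{a=1}^{k} ((t₁ − t₂^{p^{2a}})·(t₂ − t₁^{p^{2a}}))^{p^{k−a}} − (t₁·t₂)^{(p^k − 1)/(p − 1)} · (t₁^{p^k} − t₂^{p^k}) lies in the ideal (t₁, t₂)^{p^{k+1}}; that is, the product is congruent to (t₁t₂)^{(p^k−1)/(p−1)}·(t₁^{p^k} − t₂^{p^k}) modulo terms of total degree ≥ p^{k+1}. -/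
open MvPolynomial

/-- Let `p` be an odd prime and `k ≥ 1`. In `𝔽_p[t₁, t₂]`,
`(t₁ − t₂)^{p^k} · ∏_{a=1}^{k} ((t₁ − t₂^{p^{2a}})(t₂ − t₁^{p^{2a}}))^{p^{k−a}}`
is congruent to `(t₁t₂)^{(p^k−1)/(p−1)} · (t₁^{p^k} − t₂^{p^k})` modulo the ideal
`(t₁, t₂)^{p^{k+1}}`. -/
theorem statement14 (p : ℕ) (hp : p.Prime) (hodd : Odd p) (k : ℕ) (hk : 1 ≤ k) :
    ((X 0 : MvPolynomial (Fin 2) (ZMod p)) - X 1) ^ p ^ k *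
        ∏ a ∈ Finset.Icc 1 k,
          ((X 0 - X 1 ^ p ^ (2 * a)) * (X 1 - X 0 ^ p ^ (2 * a))) ^ p ^ (k - a) -
      (X 0 * X 1) ^ ((p ^ k - 1) / (p - 1)) * (X 0 ^ p ^ k - X 1 ^ p ^ k) ∈
      (Ideal.span {(X 0 : MvPolynomial (Fin 2) (ZMod p)), X 1}) ^ p ^ (k + 1) := by
  have : Fact p.Prime := ⟨hp⟩
  set J : Ideal (MvPolynomial (Fin 2) (ZMod p)) :=
    (Ideal.span {(X 0 : MvPolynomial (Fin 2) (ZMod p)), X 1}) ^ p ^ (k + 1) with hJ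
  have hz : ∀ a ∈ Finset.Icc 1 k, ∀ x ∈ Ideal.span {(X 0 : MvPolynomial (Fin 2) (ZMod p)), X 1},
      Ideal.Quotient.mk J ((x ^ p ^ (2 * a)) ^ p ^ (k - a)) = 0 := by
    intro a ha x hx
    rw [Finset.mem_Icc] at ha
    rw [Ideal.Quotient.eq_zero_iff_mem, ← pow_mul, ← pow_add]
    exact Ideal.pow_le_pow_right (Nat.pow_le_pow_right hp.pos (by omega))
      (Ideal.pow_mem_pow hx _)
  have h0 : (X 0 : MvPolynomial (Fin 2) (ZMod p)) ∈
      Ideal.span {(X 0 : MvPolynomial (Fin 2) (ZMod p)), X 1} := Ideal.subset_span (by simp)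
  have h1 : (X 1 : MvPolynomial (Fin 2) (ZMod p)) ∈
      Ideal.span {(X 0 : MvPolynomial (Fin 2) (ZMod p)), X 1} := Ideal.subset_span (by simp)
  have hsum : ∑ a ∈ Finset.Icc 1 k, p ^ (k - a) = (p ^ k - 1) / (p - 1) := by
    rw [← Nat.geomSum_eq hp.two_le k]
    refine Finset.sum_bij' (fun a _ => k - a) (fun a _ => k - a) ?_ ?_ ?_ ?_ ?_
    · intro a ha
      simp only [Finset.mem_Icc, Finset.mem_range] at *
      omega
    · intro a ha
      simp only [Finset.mem_Icc, Finset.mem_range] at *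
      omega
    · intro a ha
      simp only [Finset.mem_Icc] at *
      omega
    · intro a ha
      simp only [Finset.mem_range] at *
      omega
    · intro a ha
      rfl
  have hprod : Ideal.Quotient.mk J (∏ a ∈ Finset.Icc 1 k,
          ((X 0 - X 1 ^ p ^ (2 * a)) * (X 1 - X 0 ^ p ^ (2 * a))) ^ p ^ (k - a)) =
      Ideal.Quotient.mk J ((X 0 * X 1) ^ ((p ^ k - 1) / (p - 1))) := by
    rw [← hsum, ← Finset.prod_pow_eq_pow_sum, map_prod, map_prod]
    refine Finset.prod_congr rfl fun a ha => ?_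
    rw [mul_pow, mul_pow, sub_pow_char_pow, sub_pow_char_pow, map_mul, map_mul, map_sub, map_sub,
      hz a ha _ h0, hz a ha _ h1, sub_zero, sub_zero]
  rw [← Ideal.Quotient.eq, map_mul, hprod, sub_pow_char_pow, map_mul, mul_comm]
end

section
/- Let p be an odd prime and k ≥ 0 an integer. In the polynomial ring 𝔽_p[t₁, t₂], the element ∏_{a=0}^{k} ((t₁ − t₂^{p^{2a+1}})·(t₂ − t₁^{p^{2a+1}}))^{p^{k−a}} − (t₁·t₂)^{(p^{k+1} − 1)/(p − 1)} lies in the ideal (t₁, t₂)^{p^{k+1}}; that is, the product is congruent to (t₁t₂)^{(p^{k+1}−1)/(p−1)} modulo terms of total degree ≥ p^{k+1}. -/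
open MvPolynomial

/-- Let `p` be an odd prime and `k ≥ 0`. In `𝔽_p[t₁, t₂]`,
`∏_{a=0}^{k} ((t₁ − t₂^{p^{2a+1}})(t₂ − t₁^{p^{2a+1}}))^{p^{k−a}}`
is congruent to `(t₁t₂)^{(p^{k+1}−1)/(p−1)}` modulo the ideal `(t₁, t₂)^{p^{k+1}}`. -/
theorem statement15 (p : ℕ) (hp : p.Prime) (hodd : Odd p) (k : ℕ) :
    (∏ a ∈ Finset.range (k + 1),
        (((X 0 : MvPolynomial (Fin 2) (ZMod p)) - X 1 ^ p ^ (2 * a + 1)) *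
          (X 1 - X 0 ^ p ^ (2 * a + 1))) ^ p ^ (k - a)) -
      (X 0 * X 1) ^ ((p ^ (k + 1) - 1) / (p - 1)) ∈
      (Ideal.span {(X 0 : MvPolynomial (Fin 2) (ZMod p)), X 1}) ^ p ^ (k + 1) := by
  haveI : Fact p.Prime := ⟨hp⟩
  set I : Ideal (MvPolynomial (Fin 2) (ZMod p)) := Ideal.span {X 0, X 1} with hI
  have h0 : (X 0 : MvPolynomial (Fin 2) (ZMod p)) ∈ I := Ideal.subset_span (by simp)
  have h1 : (X 1 : MvPolynomial (Fin 2) (ZMod p)) ∈ I := Ideal.subset_span (by simp)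
  have hsum : (p ^ (k + 1) - 1) / (p - 1) = ∑ a ∈ Finset.range (k + 1), p ^ (k - a) := by
    rw [← Nat.geomSum_eq hp.two_le (k + 1), ← Finset.sum_range_reflect]
    rfl
  have key : ∀ a ∈ Finset.range (k + 1), ∀ x y : MvPolynomial (Fin 2) (ZMod p), y ∈ I →
      Ideal.Quotient.mk (I ^ p ^ (k + 1)) ((x - y ^ p ^ (2 * a + 1)) ^ p ^ (k - a)) =
      Ideal.Quotient.mk (I ^ p ^ (k + 1)) (x ^ p ^ (k - a)) := by
    intro a ha x y hy
    have hak : a ≤ k := Nat.lt_succ_iff.mp (Finset.mem_range.mp ha)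
    rw [sub_pow_char_pow, Ideal.Quotient.eq, sub_sub_cancel_left, ← pow_mul, ← pow_add]
    refine neg_mem (Ideal.pow_le_pow_right ?_ (Ideal.pow_mem_pow hy _))
    exact Nat.pow_le_pow_right hp.pos (by omega)
  rw [← Ideal.Quotient.eq, hsum, ← Finset.prod_pow_eq_pow_sum, map_prod, map_prod]
  refine Finset.prod_congr rfl fun a ha => ?_
  rw [mul_pow, mul_pow, map_mul, map_mul, key a ha _ _ h1, key a ha _ _ h0]
end

section
/- Let p be an odd prime, O = ℤ_p, and q = p. Let ε₁, ε₂ ∈ ℤ_p^× and let M be the integral quadratic lattice ℤ_p² with quadratic form Q(x, y) = ε₁·p·x² + ε₂·p²·y². Let N = p^{2k}·N₀ with N₀ ∈ ℤ_p of valuation ν_p(N₀) ∈ {0, 1} and k ≥ 1, and assume the quadratic space (M ⊥ ⟨N⟩) ⊗ ℚ_p is not isometric to a subspace of (M₂(ℚ_p), det). Suppose P is a polynomial with real coefficients such that for every m ≥ 0, the sequence d ↦ #Rep_{δ(N) ⊥ H^+_{2m}, M}(ℤ_p/p^d) / p^{d(4m+3)} converges as d → ∞ to P(p^{−m})·(1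 − p^{−1−m}). Then P(X) = 1 + pX + (p − 1)X² − pX³ − pX⁴; in particular the derived local density −P′(1) equals 4p + 2. -/
/-! Shared setup: quadratic lattices over a complete discrete valuation ring `O` with finite
residue field of cardinality `q` and uniformizer `π`.

A quadratic lattice of rank `n` over `O` is the finite free `O`-module `Fin n → O` equipped
with an (`O`-valued, hence integral) quadratic form `Q`; the associated bilinear form is
`(x, y) = Q (x + y) - Q x - Q y` (`QuadraticMap.polar`).  The lattice is *self-dual* when
the associated bilinear form is a perfect pairing, i.e. when `QuadraticMap.polarBilin Q`
is bijective as a map to the dual module.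

For `d ≥ 1`, `Rep_{H,L}(O/π^d)` — the set of `O/π^d`-linear maps `L/π^d L → H/π^d H`
intertwining the reductions of the quadratic forms — is encoded by the tuples of images of
the standard basis vectors of `L`; such a tuple comes from a quadratic-module homomorphism
exactly when it reproduces the Gram data of the basis modulo `π^d`. -/

open Function Filter

namespace ASW

noncomputable section

variable {O : Type*} [CommRing O]

/-- The quotient `W ⧸ c·W`. -/
abbrev modQuot (c : O) (W : Type*) [AddCommGroup W] [Module O W] :=
  W ⧸ ((Ideal.span {c} : Ideal O) • (⊤ : Submodule O W))

/-- Gram data of a quadratic form on the free module `Fin r → O` with respect to the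
standard basis `e_j = Pi.single j 1`: values of the form on the diagonal, the associated
bilinear form `(x, y) = Q (x + y) - Q x - Q y` off the diagonal. -/
def gramOf {r : ℕ} (QM : QuadraticForm O (Fin r → O)) : Fin r → Fin r → O :=
  fun j l =>
    if j = l then QM (Pi.single j 1)
    else QuadraticMap.polar (⇑QM) (Pi.single j 1) (Pi.single l 1)

/-- Gram data of the orthogonal direct sum `M ⊥ ⟨N⟩`, where `M` has Gram data `g` and
`⟨N⟩` is the rank-one lattice with generator of norm `N`. -/
def gramOrth {r : ℕ} (g : Fin r → Fin r → O) (N : O) : Fin (r + 1) → Fin (r + 1) → O :=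
  fun j l =>
    if hj : (j : ℕ) < r then (if hl : (l : ℕ) < r then g ⟨j, hj⟩ ⟨l, hl⟩ else 0)
    else if (l : ℕ) < r then 0 else N

/-- The set `Rep_{W,L}(O/π^d)` of quadratic-module homomorphisms `L/π^d L → W/π^d W`,
where `L` is the free quadratic lattice of rank `r` with Gram data `g`: a homomorphism is
identified with the tuple of images of the basis vectors of `L`, which can be any tuple in
`(W/π^d W)^r` reproducing the Gram data `g` modulo `π^d`. -/
def repSet (π : O) (d : ℕ) {W : Type*} [AddCommGroup W] [Module O W]
    (QW : QuadraticForm O W) {r : ℕ} (g : Fin r → Fin r → O) :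
    Set (Fin r → modQuot (π ^ d) W) :=
  (fun x : Fin r → W => fun j => (Submodule.Quotient.mk (x j) : modQuot (π ^ d) W)) ''
    {x | (∀ j, π ^ d ∣ QW (x j) - g j j) ∧
      ∀ j l, j ≠ l → π ^ d ∣ QuadraticMap.polar (⇑QW) (x j) (x l) - g j l}

/-- `#Rep_{W,L}(O/π^d)`. -/
def repCount (π : O) (d : ℕ) {W : Type*} [AddCommGroup W] [Module O W]
    (QW : QuadraticForm O W) {r : ℕ} (g : Fin r → Fin r → O) : ℕ :=
  Nat.card (repSet π d QW g)

/-- The orthogonal complement `{y | (y, w) = 0}` of a vector `w`, where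
`(y, w) = Q (y + w) - Q y - Q w` is the associated bilinear form. -/
def perp {W : Type*} [AddCommGroup W] [Module O W] (QW : QuadraticForm O W) (w : W) :
    Submodule O W :=
  LinearMap.ker ((QuadraticMap.polarBilin QW).flip w)

/-- The restriction of a quadratic form to a submodule. -/
def restrict {W : Type*} [AddCommGroup W] [Module O W] (QW : QuadraticForm O W)
    (U : Submodule O W) : QuadraticForm O U :=
  QW.comp U.subtype

/-- The hyperbolic lattice `H⁺_{2m}`: the orthogonal direct sum of `m` copies of
`(O², (x, y) ↦ x·y)`. -/
def hyp (O : Type*) [CommRing O] (m : ℕ) : QuadraticForm O (Fin (2 * m) → O) :=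
  Matrix.toQuadraticMap'
    (Matrix.of fun i j : Fin (2 * m) => if (i : ℕ) % 2 = 0 ∧ (j : ℕ) = (i : ℕ) + 1 then 1 else 0)

/-- The lattice `δ(c) = O³` with quadratic form `(a, b, c') ↦ -c·a² - b·c'`
(the matrices `[[-ca, b], [c', a]]` with the determinant form). -/
def delta (O : Type*) [CommRing O] (c : O) : QuadraticForm O (Fin 3 → O) :=
  Matrix.toQuadraticMap' !![-c, 0, 0; 0, 0, -1; 0, 0, 0]

/-- `D(k', r') = k'·r' - r'·(r'+1)/2`, the dimension of the generic fiber of the scheme of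
representations of a rank-`r'` lattice by a rank-`k'` lattice. -/
def Dexp (k' r' : ℕ) : ℕ := k' * r' - r' * (r' + 1) / 2

/-- `∏_{j=1}^{s} (1 - q^{-2j-2m})`. -/
def norTail (q : ℝ) (s m : ℕ) : ℝ := ∏ j ∈ Finset.range s, (1 - q⁻¹ ^ (2 * (j + 1) + 2 * m))

/-- The normalizing factor for `δ(N) ⊥ H⁺_{2m+r-2}` against a rank-`r` lattice (`r` even):
`(1 - q^{-r/2-m})·∏_{j=1}^{(r-2)/2}(1 - q^{-2j-2m})` when `ν(N) ≥ 1`, and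
`∏_{j=1}^{r/2}(1 - q^{-2j-2m})` when `ν(N) = 0`. -/
def norOdd (q : ℝ) (r n m : ℕ) : ℝ :=
  if 1 ≤ n then (1 - q⁻¹ ^ (r / 2 + m)) * norTail q ((r - 2) / 2) m
  else norTail q (r / 2) m

/-- The normalizing factor `(1 - q^{-(r+2)/2-m})·∏_{j=1}^{r/2}(1 - q^{-2j-2m})` for
`H⁺_{2m+r+2}` against a rank-`(r+1)` lattice. -/
def norEven (q : ℝ) (r m : ℕ) : ℝ := (1 - q⁻¹ ^ ((r + 2) / 2 + m)) * norTail q (r / 2) m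

end

end ASW

namespace S16
set_option linter.all false
open Matrix

section
variable {p : ℕ} [hp : Fact p.Prime] {d : ℕ}

lemma unit_or_dvd (hd : 1 ≤ d) (x : ZMod (p ^ d)) : IsUnit x ∨ (p : ZMod (p ^ d)) ∣ x := by
  have : NeZero (p ^ d) := ⟨(pow_pos hp.out.pos d).ne'⟩
  obtain ⟨n, rfl⟩ := ZMod.natCast_zmod_surjective x
  by_cases h : p ∣ n
  · right; exact_mod_cast Nat.cast_dvd_cast h
  · left
    rw [ZMod.isUnit_iff_coprime]
    exact Nat.Coprime.pow_right _ ((Nat.Prime.coprime_iff_not_dvd hp.out).2 h).symm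

lemma ppow_ne {i : ℕ} (hi : i < d) : (p : ZMod (p ^ d)) ^ i ≠ 0 := by
  intro h
  have : ((p ^ i : ℕ) : ZMod (p ^ d)) = 0 := by push_cast; exact h
  rw [ZMod.natCast_eq_zero_iff] at this
  have := (Nat.pow_dvd_pow_iff_le_right hp.out.one_lt).1 this
  omega

lemma not_dvd_unit (hd : 1 ≤ d) {x : ZMod (p ^ d)} (hx : IsUnit x) : ¬ (p : ZMod (p ^ d)) ∣ x := by
  intro h
  have h1 : IsUnit (p : ZMod (p ^ d)) := isUnit_of_dvd_unit h hx
  have h2 : (p : ZMod (p ^ d)) ^ d = 0 := by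
    have := ZMod.natCast_self (p ^ d); push_cast at this; exact this
  have h3 := h1.pow d
  rw [h2] at h3
  have := ppow_ne (p := p) (d := d) (i := 0) (by omega)
  have : Nontrivial (ZMod (p ^ d)) := ⟨_, _, this⟩
  exact not_isUnit_zero h3

lemma unit_add (hd : 1 ≤ d) {x : ZMod (p ^ d)} (hx : IsUnit x) (y : ZMod (p ^ d)) :
    IsUnit (x + (p : ZMod (p ^ d)) * y) := by
  rcases unit_or_dvd hd (x + (p : ZMod (p ^ d)) * y) with h | h
  · exact h
  · exact absurd ((dvd_add_left (dvd_mul_right _ _)).1 h) (not_dvd_unit hd hx)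

lemma not_dvd_ppow_unit {i : ℕ} (hi : i < d) {x : ZMod (p ^ d)} (hx : IsUnit x) :
    ¬ (p : ZMod (p ^ d)) ^ (i + 1) ∣ p ^ i * x := by
  rintro ⟨y, hy⟩
  have h : (p : ZMod (p ^ d)) ^ i * (x + p * (-y)) = 0 := by
    rw [mul_add, hy]; ring
  have h2 := unit_add (by omega) hx (-y)
  exact ppow_ne hi ((h2.mul_left_eq_zero).1 h)

lemma card_dvd {i : ℕ} (hi : i ≤ d) :
    Nat.card {r : ZMod (p ^ d) // (p : ZMod (p ^ d)) ^ i ∣ r} = p ^ (d - i) := by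
  have : NeZero (p ^ d) := ⟨(pow_pos hp.out.pos d).ne'⟩
  have h := Nat.card_zmultiples (((p ^ i : ℕ) : ZMod (p ^ d)))
  rw [ZMod.addOrderOf_coe _ (NeZero.ne _), Nat.gcd_eq_right (pow_dvd_pow p hi),
    Nat.pow_div hi hp.out.pos] at h
  rw [← h]
  apply Nat.card_congr
  apply Equiv.subtypeEquivRight
  intro r
  rw [AddSubgroup.mem_zmultiples_iff]
  constructor
  · rintro ⟨y, rfl⟩
    obtain ⟨n, rfl⟩ := ZMod.natCast_zmod_surjective y
    refine ⟨n, ?_⟩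
    simp [mul_comm]
  · rintro ⟨n, rfl⟩
    refine ⟨n, ?_⟩
    simp [mul_comm]

/-- fibre count of a linear equation -/
lemma card_lin {n i : ℕ} (hi : i ≤ d) (f : Fin n → ZMod (p ^ d))
    (hf : ∀ j, (p : ZMod (p ^ d)) ^ i ∣ f j) (j : Fin n) (u : ZMod (p ^ d)) (hu : IsUnit u)
    (hj : f j = p ^ i * u) (c : ZMod (p ^ d)) (hc : (p : ZMod (p ^ d)) ^ i ∣ c) :
    Nat.card {g : Fin n → ZMod (p ^ d) // f ⬝ᵥ g = c} * p ^ (d - i) = p ^ (d * n) := by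
  classical
  have : NeZero (p ^ d) := ⟨(pow_pos hp.out.pos d).ne'⟩
  let φ : (Fin n → ZMod (p ^ d)) →+ ZMod (p ^ d) :=
    { toFun := fun g => f ⬝ᵥ g
      map_zero' := by simp
      map_add' := fun a b => dotProduct_add _ _ _ }
  have hr : ∀ r, r ∈ φ.range ↔ (p : ZMod (p ^ d)) ^ i ∣ r := by
    intro r
    constructor
    · rintro ⟨g, rfl⟩
      change _ ∣ f ⬝ᵥ g
      exact Finset.dvd_sum fun k _ => (hf k).mul_right _
    · rintro ⟨y, rfl⟩
      obtain ⟨v, rfl⟩ := hu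
      refine ⟨Pi.single j (((v⁻¹ : (ZMod (p ^ d))ˣ) : ZMod (p ^ d)) * y), ?_⟩
      change f ⬝ᵥ _ = _
      rw [dotProduct_single, hj]
      rw [mul_assoc, Units.mul_inv_cancel_left]
  have h1 : Nat.card φ.range = p ^ (d - i) := by
    rw [← card_dvd (p := p) hi]
    exact Nat.card_congr (Equiv.subtypeEquivRight hr)
  have h2 := φ.ker.card_mul_index
  rw [AddSubgroup.index_ker, h1] at h2
  have h3 : Nat.card (Fin n → ZMod (p ^ d)) = p ^ (d * n) := by
    simp [Nat.card_eq_fintype_card, ZMod.card, pow_mul]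
  rw [h3] at h2
  rw [← h2]
  congr 1
  obtain ⟨g0, hg0⟩ := (hr c).2 hc
  apply Nat.card_congr
  refine (Equiv.subRight g0).subtypeEquiv ?_
  intro g
  rw [AddMonoidHom.mem_ker]
  change _ ↔ φ (g - g0) = 0
  rw [map_sub, sub_eq_zero, hg0]; rfl

noncomputable def Rn (p d n : ℕ) (c : ZMod (p ^ d)) : ℕ :=
  Nat.card {q : (Fin n → ZMod (p ^ d)) × (Fin n → ZMod (p ^ d)) // q.1 ⬝ᵥ q.2 = c}

lemma card_all {n i : ℕ} (hi : i ≤ d) :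
    Nat.card {f : Fin n → ZMod (p ^ d) // ∀ j, (p : ZMod (p ^ d)) ^ i ∣ f j} = p ^ ((d - i) * n) := by
  rw [Nat.card_congr (Equiv.subtypePiEquivPi (p := fun (_ : Fin n) x => (p : ZMod (p ^ d)) ^ i ∣ x)), Nat.card_pi]
  simp only [card_dvd hi, pow_mul, Finset.prod_const, Finset.card_univ, Fintype.card_fin]

open Classical in
lemma sum_step [NeZero (p ^ d)] {n i : ℕ} (hi : i < d) (c : ZMod (p ^ d)) (hc : (p : ZMod (p ^ d)) ^ i ∣ c) :
    (∑ f : Fin n → ZMod (p ^ d) with (∀ j, (p : ZMod (p ^ d)) ^ i ∣ f j),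
      (Nat.card {g : Fin n → ZMod (p ^ d) // f ⬝ᵥ g = c} : ℝ)) =
    ((p : ℝ) ^ ((d - i) * n) - (p : ℝ) ^ ((d - (i + 1)) * n)) * ((p : ℝ) ^ (d * n) / (p : ℝ) ^ (d - i)) +
    (∑ f : Fin n → ZMod (p ^ d) with (∀ j, (p : ZMod (p ^ d)) ^ (i + 1) ∣ f j),
      (Nat.card {g : Fin n → ZMod (p ^ d) // f ⬝ᵥ g = c} : ℝ)) := by
  have hsub : (Finset.univ.filter fun f : Fin n → ZMod (p ^ d) => ∀ j, (p : ZMod (p ^ d)) ^ (i + 1) ∣ f j)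
     ⊆ (Finset.univ.filter fun f : Fin n → ZMod (p ^ d) => ∀ j, (p : ZMod (p ^ d)) ^ i ∣ f j) := by
    intro f
    simp only [Finset.mem_filter, Finset.mem_univ, true_and]
    exact fun h j => (pow_dvd_pow _ (Nat.le_succ i)).trans (h j)
  have hcard : ∀ i ≤ d, ((Finset.univ.filter fun f : Fin n → ZMod (p ^ d) => ∀ j, (p : ZMod (p ^ d)) ^ i ∣ f j).card)
      = p ^ ((d - i) * n) := by
    intro i hi
    rw [← card_all (p := p) hi, Nat.card_eq_fintype_card, Fintype.card_subtype]
  rw [← Finset.sum_sdiff hsub]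
  congr 1
  have hp0 : (p : ℝ) ≠ 0 := by exact_mod_cast hp.out.ne_zero
  rw [Finset.sum_congr rfl (g := fun _ => (p : ℝ) ^ (d * n) / (p : ℝ) ^ (d - i)), Finset.sum_const,
    nsmul_eq_mul, Finset.cast_card_sdiff hsub, hcard i hi.le, hcard (i + 1) hi]
  · push_cast; rfl
  · intro f hf
    simp only [Finset.mem_sdiff, Finset.mem_filter, Finset.mem_univ, true_and, not_forall] at hf
    obtain ⟨h1, j, h2⟩ := hf
    obtain ⟨u, hu⟩ := h1 j
    rcases unit_or_dvd (by omega) u with h | h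
    · rw [eq_div_iff (pow_ne_zero _ hp0)]
      exact_mod_cast card_lin hi.le f h1 j u h hu c hc
    · exact absurd (by rw [hu, pow_succ]; exact mul_dvd_mul_left _ h) h2

open Classical in
lemma sum_last [NeZero (p ^ d)] {n i : ℕ} (c : ZMod (p ^ d)) (hc : ¬ (p : ZMod (p ^ d)) ^ i ∣ c) :
    (∑ f : Fin n → ZMod (p ^ d) with (∀ j, (p : ZMod (p ^ d)) ^ i ∣ f j),
      (Nat.card {g : Fin n → ZMod (p ^ d) // f ⬝ᵥ g = c} : ℝ)) = 0 := by
  apply Finset.sum_eq_zero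
  intro f hf
  simp only [Finset.mem_filter, Finset.mem_univ, true_and] at hf
  have : IsEmpty {g : Fin n → ZMod (p ^ d) // f ⬝ᵥ g = c} := by
    refine ⟨fun ⟨g, hg⟩ => hc ?_⟩
    rw [← hg]
    exact Finset.dvd_sum fun k _ => (hf k).mul_right _
  simp

lemma Rn_eq [NeZero (p ^ d)] {n : ℕ} (c : ZMod (p ^ d)) :
    (Rn p d n c : ℝ) = ∑ f : Fin n → ZMod (p ^ d) with (∀ j, (p : ZMod (p ^ d)) ^ 0 ∣ f j),
      (Nat.card {g : Fin n → ZMod (p ^ d) // f ⬝ᵥ g = c} : ℝ) := by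
  classical
  simp only [pow_zero, isUnit_one, IsUnit.dvd, implies_true, Finset.filter_true]
  unfold Rn
  rw [Nat.card_congr (Equiv.subtypeProdEquivSigmaSubtype
    (fun (f g : Fin n → ZMod (p ^ d)) => f ⬝ᵥ g = c)), Nat.card_sigma]
  push_cast; rfl

/-- closed forms, scaled -/
lemma Rn_one {n : ℕ} (hd : 2 ≤ d) {x : ZMod (p ^ d)} (hx : IsUnit x) :
    (Rn p d n (p * x) : ℝ) * p ^ d = (p : ℝ) ^ (d * (2 * n)) *
      (1 - ((p : ℝ)⁻¹) ^ n) * (1 + p * ((p : ℝ)⁻¹) ^ n) := by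
  have : NeZero (p ^ d) := ⟨(pow_pos hp.out.pos d).ne'⟩
  have hp0 : (p : ℝ) ≠ 0 := by exact_mod_cast hp.out.ne_zero
  have h2 := not_dvd_ppow_unit (p := p) (d := d) (i := 1) (by omega) hx
  rw [pow_one] at h2
  rw [Rn_eq, sum_step (by omega) _ (by simp), sum_step (by omega) _ (by simp), sum_last _ h2]
  obtain ⟨e, rfl⟩ := Nat.exists_eq_add_of_le hd
  rw [show 2 + e - 0 = e + 2 by omega, show 2 + e - (0 + 1) = e + 1 by omega,
    show 2 + e - (0 + 1 + 1) = e by omega, inv_pow]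
  field_simp
  ring

lemma Rn_two {n : ℕ} (hd : 3 ≤ d) {x : ZMod (p ^ d)} (hx : IsUnit x) :
    (Rn p d n (p ^ 2 * x) : ℝ) * p ^ d = (p : ℝ) ^ (d * (2 * n)) *
      (1 - ((p : ℝ)⁻¹) ^ n) * (1 + p * ((p : ℝ)⁻¹) ^ n + p ^ 2 * (((p : ℝ)⁻¹) ^ n) ^ 2) := by
  have : NeZero (p ^ d) := ⟨(pow_pos hp.out.pos d).ne'⟩
  have hp0 : (p : ℝ) ≠ 0 := by exact_mod_cast hp.out.ne_zero
  have h2 := not_dvd_ppow_unit (p := p) (d := d) (i := 2) (by omega) hx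
  have h1 : (p : ZMod (p ^ d)) ^ (0 + 1) ∣ p ^ 2 * x := Dvd.intro (p * x) (by ring)
  rw [Rn_eq, sum_step (by omega) _ (by simp), sum_step (by omega) _ h1,
    sum_step (by omega) _ (Dvd.intro _ rfl), sum_last _ h2]
  obtain ⟨e, rfl⟩ := Nat.exists_eq_add_of_le hd
  rw [show 3 + e - 0 = e + 3 by omega, show 3 + e - (0 + 1) = e + 2 by omega,
    show 3 + e - (0 + 1 + 1) = e + 1 by omega, show 3 + e - (0 + 1 + 1 + 1) = e by omega, inv_pow]
  field_simp
  ring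

end
section
variable {R : Type*} [CommRing R] {m : ℕ}

def coreEquiv (u : Rˣ) (g0 : R) (F G : Fin m → R) (α β γ : R) (hα : (u : R) * g0 + F ⬝ᵥ G = α) :
    {v : (R × (Fin m → R)) × (R × (Fin m → R)) //
      ((u : R) * v.2.1 + F ⬝ᵥ v.2.2) + (v.1.1 * g0 + v.1.2 ⬝ᵥ G) = γ ∧
        v.1.1 * v.2.1 + v.1.2 ⬝ᵥ v.2.2 = β} ≃
    {w : R × ((Fin m → R) × (Fin m → R)) // w.2.1 ⬝ᵥ w.2.2 = β - γ * w.1 + α * w.1 ^ 2} where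
  toFun v := ⟨(((u⁻¹ : Rˣ) : R) * v.1.1.1, (v.1.1.2 - (((u⁻¹ : Rˣ) : R) * v.1.1.1) • F,
      v.1.2.2 - (((u⁻¹ : Rˣ) : R) * v.1.1.1) • G)), by
    obtain ⟨⟨⟨a, x⟩, ⟨b, y⟩⟩, h1, h2⟩ := v
    simp only at h1 h2 ⊢
    obtain ⟨t, rfl⟩ : ∃ t, a = u * t := ⟨((u⁻¹ : Rˣ) : R) * a, by simp⟩
    simp only [Units.inv_mul_cancel_left, sub_dotProduct, dotProduct_sub, smul_dotProduct,
      dotProduct_smul, smul_eq_mul]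
    rw [← h1, ← h2, ← hα]
    ring⟩
  invFun w := ⟨(((u : R) * w.1.1, w.1.2.1 + w.1.1 • F),
      (w.1.1 * g0 + ((u⁻¹ : Rˣ) : R) * (γ - 2 * w.1.1 * α - (F ⬝ᵥ w.1.2.2 + w.1.2.1 ⬝ᵥ G)),
        w.1.2.2 + w.1.1 • G)), by
    obtain ⟨⟨t, ⟨h, k⟩⟩, h1⟩ := w
    simp only at h1 ⊢
    simp only [add_dotProduct, dotProduct_add, smul_dotProduct, dotProduct_smul, smul_eq_mul, h1,
      mul_add, Units.mul_inv_cancel_left, mul_right_comm (u : R) t]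
    constructor
    · rw [← hα]; ring
    · rw [← hα]; ring⟩
  left_inv v := by
    obtain ⟨⟨⟨a, x⟩, ⟨b, y⟩⟩, h1, h2⟩ := v
    simp only at h1 h2 ⊢
    obtain ⟨t, rfl⟩ : ∃ t, a = u * t := ⟨((u⁻¹ : Rˣ) : R) * a, by simp⟩
    simp only [Units.inv_mul_cancel_left, sub_dotProduct, dotProduct_sub, smul_dotProduct,
      dotProduct_smul, smul_eq_mul, sub_add_cancel, Subtype.mk.injEq, Prod.mk.injEq, true_and, and_true]
    rw [← h1, ← hα]
    have : b = ((u⁻¹ : Rˣ) : R) * (u * b) := by simp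
    have h3 : t * g0 = ((u⁻¹ : Rˣ) : R) * (u * (t * g0)) := by simp
    linear_combination h3 - this
  right_inv w := by
    obtain ⟨⟨t, ⟨h, k⟩⟩, h1⟩ := w
    simp

lemma insert_dot (i0 : Fin (m + 1)) (v w : R × (Fin m → R)) :
    (Fin.insertNthEquiv (fun _ => R) i0 v) ⬝ᵥ (Fin.insertNthEquiv (fun _ => R) i0 w)
      = v.1 * w.1 + v.2 ⬝ᵥ w.2 := by
  unfold dotProduct
  rw [Fin.sum_univ_succAbove _ i0]
  simp

lemma pair_f (f g : Fin (m + 1) → R) (i0 : Fin (m + 1)) (hu : IsUnit (f i0)) (α β γ : R)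
    (hα : f ⬝ᵥ g = α) :
    Nat.card {v : (Fin (m + 1) → R) × (Fin (m + 1) → R) //
      f ⬝ᵥ v.2 + v.1 ⬝ᵥ g = γ ∧ v.1 ⬝ᵥ v.2 = β} =
    Nat.card {w : R × ((Fin m → R) × (Fin m → R)) // w.2.1 ⬝ᵥ w.2.2 = β - γ * w.1 + α * w.1 ^ 2} := by
  obtain ⟨u, hu⟩ := hu
  obtain ⟨f, rfl⟩ := (Fin.insertNthEquiv (fun _ => R) i0).surjective f
  obtain ⟨g, rfl⟩ := (Fin.insertNthEquiv (fun _ => R) i0).surjective g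
  have hu' : f.1 = u := by simpa using hu.symm
  rw [insert_dot, hu'] at hα
  rw [← Nat.card_congr (coreEquiv u g.1 f.2 g.2 α β γ hα)]
  symm
  apply Nat.card_congr
  refine ((Fin.insertNthEquiv (fun _ => R) i0).prodCongr (Fin.insertNthEquiv (fun _ => R) i0)).subtypeEquiv ?_
  intro v
  simp only [Equiv.prodCongr_apply, Prod.map, insert_dot, hu']

lemma pair_count (f g : Fin (m + 1) → R) (i0 : Fin (m + 1)) (hu : IsUnit (f i0) ∨ IsUnit (g i0))
    (α β γ : R) (hα : f ⬝ᵥ g = α) :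
    Nat.card {v : (Fin (m + 1) → R) × (Fin (m + 1) → R) //
      f ⬝ᵥ v.2 + v.1 ⬝ᵥ g = γ ∧ v.1 ⬝ᵥ v.2 = β} =
    Nat.card {w : R × ((Fin m → R) × (Fin m → R)) // w.2.1 ⬝ᵥ w.2.2 = β - γ * w.1 + α * w.1 ^ 2} := by
  rcases hu with h | h
  · exact pair_f f g i0 h α β γ hα
  · rw [← pair_f g f i0 h α β γ (by rw [dotProduct_comm]; exact hα)]
    apply Nat.card_congr
    refine (Equiv.prodComm _ _).subtypeEquiv ?_
    intro v
    simp only [Equiv.prodComm_apply, Prod.fst_swap, Prod.snd_swap]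
    rw [dotProduct_comm v.2 v.1, dotProduct_comm v.2 f, dotProduct_comm g v.1, add_comm]
end

section
variable {p : ℕ} [hp : Fact p.Prime] {d : ℕ}

def Tset (p d m : ℕ) (A B N : ZMod (p ^ d)) :
    Set ((ZMod (p ^ d) × ((Fin (m + 1) → ZMod (p ^ d)) × (Fin (m + 1) → ZMod (p ^ d)))) ×
      (ZMod (p ^ d) × ((Fin (m + 1) → ZMod (p ^ d)) × (Fin (m + 1) → ZMod (p ^ d))))) :=
  {z | -N * z.1.1 ^ 2 + z.1.2.1 ⬝ᵥ z.1.2.2 = A ∧ -N * z.2.1 ^ 2 + z.2.2.1 ⬝ᵥ z.2.2.2 = B ∧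
    -(2 * N * z.1.1 * z.2.1) + (z.1.2.1 ⬝ᵥ z.2.2.2 + z.2.2.1 ⬝ᵥ z.1.2.2) = 0}

def TEquiv (m : ℕ) (A B N : ZMod (p ^ d)) : Tset p d m A B N ≃
    Σ ab : ZMod (p ^ d) × ZMod (p ^ d),
      Σ u : {u : (Fin (m + 1) → ZMod (p ^ d)) × (Fin (m + 1) → ZMod (p ^ d)) //
          u.1 ⬝ᵥ u.2 = A + N * ab.1 ^ 2},
        {v : (Fin (m + 1) → ZMod (p ^ d)) × (Fin (m + 1) → ZMod (p ^ d)) //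
          u.1.1 ⬝ᵥ v.2 + v.1 ⬝ᵥ u.1.2 = 2 * N * ab.1 * ab.2 ∧ v.1 ⬝ᵥ v.2 = B + N * ab.2 ^ 2} where
  toFun z := ⟨(z.1.1.1, z.1.2.1), ⟨z.1.1.2, by linear_combination z.2.1⟩,
    ⟨z.1.2.2, by linear_combination z.2.2.2, by linear_combination z.2.2.1⟩⟩
  invFun w := ⟨((w.1.1, w.2.1.1), (w.1.2, w.2.2.1)), by
    have h1 := w.2.1.2
    have h2 := w.2.2.2.1
    have h3 := w.2.2.2.2
    refine ⟨?_, ?_, ?_⟩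
    · simp only; linear_combination h1
    · simp only; linear_combination h3
    · simp only; linear_combination h2⟩
  left_inv _ := rfl
  right_inv _ := rfl

lemma exists_unit_coord {n : ℕ} (hd : 2 ≤ d) (f g : Fin n → ZMod (p ^ d)) {x : ZMod (p ^ d)}
    (hx : IsUnit x) (h : f ⬝ᵥ g = p * x) : ∃ i, IsUnit (f i) ∨ IsUnit (g i) := by
  by_contra hc
  push Not at hc
  have h2 := not_dvd_ppow_unit (p := p) (d := d) (i := 1) (by omega) hx
  rw [pow_one, ← h] at h2
  apply h2
  refine Finset.dvd_sum fun k _ => ?_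
  rw [pow_two]
  exact mul_dvd_mul ((unit_or_dvd (by omega) (f k)).resolve_left (hc k).1)
    ((unit_or_dvd (by omega) (g k)).resolve_left (hc k).2)

lemma fib_count {m : ℕ} (hd : 3 ≤ d) (e1 e2 n a b : ZMod (p ^ d)) (h1 : IsUnit e1)
    (h2 : ∀ b, IsUnit (e2 + n * b ^ 2)) (f g : Fin (m + 1) → ZMod (p ^ d))
    (hfg : f ⬝ᵥ g = p * e1 + p ^ 2 * n * a ^ 2) :
    (Nat.card {v : (Fin (m + 1) → ZMod (p ^ d)) × (Fin (m + 1) → ZMod (p ^ d)) //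
          f ⬝ᵥ v.2 + v.1 ⬝ᵥ g = 2 * (p ^ 2 * n) * a * b ∧
          v.1 ⬝ᵥ v.2 = p ^ 2 * e2 + p ^ 2 * n * b ^ 2} : ℝ) =
      (p : ℝ) ^ (d * (2 * m)) * (1 - ((p : ℝ)⁻¹) ^ m) *
        (1 + p * ((p : ℝ)⁻¹) ^ m + p * (((p : ℝ)⁻¹) ^ m) ^ 2) := by
  classical
  have : NeZero (p ^ d) := ⟨(pow_pos hp.out.pos d).ne'⟩
  have hp0 : (p : ℝ) ≠ 0 := by exact_mod_cast hp.out.ne_zero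
  have hfg' : f ⬝ᵥ g = p * (e1 + p * (n * a ^ 2)) := by rw [hfg]; ring
  have hun := unit_add (by omega) h1 (n * a ^ 2)
  obtain ⟨i0, hi0⟩ := exists_unit_coord (by omega) f g hun hfg'
  rw [pair_count f g i0 hi0 _ _ _ hfg, Nat.card_congr (Equiv.subtypeProdEquivSigmaSubtype
    (fun (t : ZMod (p ^ d)) (w : (Fin m → ZMod (p ^ d)) × (Fin m → ZMod (p ^ d))) =>
      w.1 ⬝ᵥ w.2 = (p ^ 2 * e2 + p ^ 2 * n * b ^ 2) - (2 * (p ^ 2 * n) * a * b) * t +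
        (p * e1 + p ^ 2 * n * a ^ 2) * t ^ 2)), Nat.card_sigma]
  push_cast
  have key : ∀ t : ZMod (p ^ d), (Nat.card {w : (Fin m → ZMod (p ^ d)) × (Fin m → ZMod (p ^ d)) //
      w.1 ⬝ᵥ w.2 = (p ^ 2 * e2 + p ^ 2 * n * b ^ 2) - (2 * (p ^ 2 * n) * a * b) * t +
        (p * e1 + p ^ 2 * n * a ^ 2) * t ^ 2} : ℝ) =
      (p : ℝ) ^ (d * (2 * m)) * (1 - ((p : ℝ)⁻¹) ^ m) * (1 + p * ((p : ℝ)⁻¹) ^ m) / p ^ d +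
      (if (p : ZMod (p ^ d)) ∣ t then
        (p : ℝ) ^ (d * (2 * m)) * (1 - ((p : ℝ)⁻¹) ^ m) * (p ^ 2 * (((p : ℝ)⁻¹) ^ m) ^ 2) / p ^ d
        else 0) := by
    intro t
    change (Rn p d m ((p ^ 2 * e2 + p ^ 2 * n * b ^ 2) - (2 * (p ^ 2 * n) * a * b) * t +
        (p * e1 + p ^ 2 * n * a ^ 2) * t ^ 2) : ℝ) = _
    split_ifs with ht
    · obtain ⟨s, rfl⟩ := ht
      have hx := unit_add (by omega) (h2 b)
        (-(2 * n * a * b * s) + (e1 + p * n * a ^ 2) * s ^ 2)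
      have := Rn_two (n := m) hd hx
      rw [← add_div, eq_div_iff (pow_ne_zero _ hp0), ← mul_add]
      rw [← this]
      congr 3
      ring
    · have htu := (unit_or_dvd (by omega) t).resolve_right ht
      have hx := unit_add (by omega) (h1.mul (htu.pow 2))
        (e2 + n * b ^ 2 - 2 * n * a * b * t + n * a ^ 2 * t ^ 2)
      have := Rn_one (n := m) (by omega) hx
      rw [add_zero, eq_div_iff (pow_ne_zero _ hp0)]
      rw [← this]
      congr 3
      ring
  simp_rw [key]
  rw [Finset.sum_add_distrib, ← Finset.sum_filter, Finset.sum_const, Finset.sum_const]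
  have hc := card_dvd (p := p) (d := d) (i := 1) (by omega)
  simp only [pow_one] at hc
  rw [Nat.card_eq_fintype_card, Fintype.card_subtype] at hc
  rw [hc, Finset.card_univ, ZMod.card]
  obtain ⟨e, rfl⟩ := Nat.exists_eq_add_of_le hd
  rw [show 3 + e - 1 = e + 2 by omega, nsmul_eq_mul, nsmul_eq_mul]
  push_cast
  rw [inv_pow]
  field_simp
  ring

lemma T_count {m : ℕ} (hd : 3 ≤ d) (e1 e2 n : ZMod (p ^ d)) (h1 : IsUnit e1)
    (h2 : ∀ b, IsUnit (e2 + n * b ^ 2)) :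
    (Nat.card (Tset p d m (p * e1) (p ^ 2 * e2) (p ^ 2 * n)) : ℝ) / (p : ℝ) ^ (d * (4 * m + 3)) =
      (1 - ((p : ℝ)⁻¹) ^ (m + 1)) * (1 + ((p : ℝ)⁻¹) ^ m) * (1 - ((p : ℝ)⁻¹) ^ m) *
        (1 + p * ((p : ℝ)⁻¹) ^ m + p * (((p : ℝ)⁻¹) ^ m) ^ 2) := by
  classical
  have : NeZero (p ^ d) := ⟨(pow_pos hp.out.pos d).ne'⟩
  have hp0 : (p : ℝ) ≠ 0 := by exact_mod_cast hp.out.ne_zero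
  rw [Nat.card_congr (TEquiv _ _ _ _), Nat.card_sigma]
  simp_rw [Nat.card_sigma]
  push_cast
  have key : ∀ ab : ZMod (p ^ d) × ZMod (p ^ d),
      (∑ u : {u : (Fin (m + 1) → ZMod (p ^ d)) × (Fin (m + 1) → ZMod (p ^ d)) //
          u.1 ⬝ᵥ u.2 = p * e1 + p ^ 2 * n * ab.1 ^ 2},
        (Nat.card {v : (Fin (m + 1) → ZMod (p ^ d)) × (Fin (m + 1) → ZMod (p ^ d)) //
          u.1.1 ⬝ᵥ v.2 + v.1 ⬝ᵥ u.1.2 = 2 * (p ^ 2 * n) * ab.1 * ab.2 ∧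
          v.1 ⬝ᵥ v.2 = p ^ 2 * e2 + p ^ 2 * n * ab.2 ^ 2} : ℝ)) =
      ((p : ℝ) ^ (d * (2 * (m + 1))) *
      (1 - ((p : ℝ)⁻¹) ^ (m + 1)) * (1 + p * ((p : ℝ)⁻¹) ^ (m + 1)) / p ^ d) *
      ((p : ℝ) ^ (d * (2 * m)) * (1 - ((p : ℝ)⁻¹) ^ m) *
        (1 + p * ((p : ℝ)⁻¹) ^ m + p * (((p : ℝ)⁻¹) ^ m) ^ 2)) := by
    intro ab
    rw [Finset.sum_congr rfl fun u _ => fib_count hd e1 e2 n ab.1 ab.2 h1 h2 u.1.1 u.1.2 u.2]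
    rw [Finset.sum_const, nsmul_eq_mul]
    congr 1
    rw [eq_div_iff (pow_ne_zero _ hp0),
      ← Rn_one (n := m + 1) (by omega) (unit_add (by omega) h1 (n * ab.1 ^ 2))]
    congr 2
    rw [Finset.card_univ, ← Nat.card_eq_fintype_card, Rn]
    rw [show (p : ZMod (p ^ d)) * e1 + p ^ 2 * n * ab.1 ^ 2 = p * (e1 + p * (n * ab.1 ^ 2)) by ring]
  rw [Finset.sum_congr rfl fun ab _ => key ab, Finset.sum_const, Finset.card_univ, Fintype.card_prod,
    ZMod.card, nsmul_eq_mul]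
  push_cast
  simp only [inv_pow]
  field_simp
  ring
end

section
variable {p : ℕ} [hp : Fact p.Prime] {d : ℕ}

lemma card_image_eq {A B C : Type*} (f : A → B) (g : A → C) (S : Set A)
    (h : ∀ a a', f a = f a' ↔ g a = g a') : Nat.card (f '' S) = Nat.card (g '' S) := by
  refine Nat.card_congr (Equiv.ofBijective
    (fun b : f '' S => (⟨g b.2.choose, _, b.2.choose_spec.1, rfl⟩ : g '' S)) ⟨?_, ?_⟩)
  · intro b b' hb
    have := (h _ _).2 (Subtype.mk.inj hb)
    rw [b.2.choose_spec.2, b'.2.choose_spec.2] at this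
    exact Subtype.ext this
  · rintro ⟨_, a, ha, rfl⟩
    refine ⟨⟨f a, a, ha, rfl⟩, ?_⟩
    apply Subtype.ext
    have hh : ∃ a', a' ∈ S ∧ f a' = f a := ⟨a, ha, rfl⟩
    exact (h _ _).1 hh.choose_spec.2

lemma tau_eq (x y : ℤ_[p]) : PadicInt.toZModPow d x = PadicInt.toZModPow d y ↔ (p : ℤ_[p]) ^ d ∣ x - y := by
  rw [← sub_eq_zero, ← map_sub, ← RingHom.mem_ker, PadicInt.ker_toZModPow, Ideal.mem_span_singleton]

lemma tau_surj : Function.Surjective (PadicInt.toZModPow (p := p) d) :=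
  ZMod.ringHom_surjective _

lemma delta_apply (c : ℤ_[p]) (x : Fin 3 → ℤ_[p]) :
    ASW.delta ℤ_[p] c x = -c * x 0 ^ 2 - x 1 * x 2 := by
  simp [ASW.delta, Matrix.toQuadraticMap', Matrix.toQuadraticForm', LinearMap.BilinMap.toQuadraticMap_apply,
    Matrix.toLinearMap₂'_apply, Fin.sum_univ_three]
  ring

lemma hyp_apply (m : ℕ) (x : Fin (2 * m) → ℤ_[p]) :
    ASW.hyp ℤ_[p] m x =
      ∑ i : Fin m, x ⟨2 * i, by omega⟩ * x ⟨2 * i + 1, by omega⟩ := by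
  simp only [ASW.hyp, Matrix.toQuadraticMap', Matrix.toQuadraticForm', LinearMap.BilinMap.toQuadraticMap_apply,
    Matrix.toLinearMap₂'_apply]
  symm
  apply Finset.sum_of_injOn (fun i : Fin m => (⟨2 * i, by omega⟩ : Fin (2 * m)))
  · intro a _ b _ hab
    simp only [Fin.mk.injEq] at hab
    exact Fin.ext (by omega)
  · intro a _; simp
  · intro i _ hi
    apply Finset.sum_eq_zero
    intro j _
    have : ¬ ((i : ℕ) % 2 = 0 ∧ (j : ℕ) = i + 1) := by
      rintro ⟨h1, h2⟩
      apply hi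
      refine ⟨⟨i / 2, by omega⟩, by simp, Fin.ext ?_⟩
      simp only
      omega
    simp [this]
  · intro i _
    rw [Finset.sum_eq_single (⟨2 * i + 1, by omega⟩ : Fin (2 * m))]
    · simp
    · intro j _ hj
      have : ¬ ((j : ℕ) = 2 * i + 1) := fun h => hj (Fin.ext h)
      simp [this]
    · simp

noncomputable def phi (d m : ℕ) (x : (Fin 3 → ℤ_[p]) × (Fin (2 * m) → ℤ_[p])) :
    ZMod (p ^ d) × ((Fin (m + 1) → ZMod (p ^ d)) × (Fin (m + 1) → ZMod (p ^ d))) :=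
  (PadicInt.toZModPow d (x.1 0),
    (Fin.cons (PadicInt.toZModPow d (-x.1 1)) (fun i : Fin m => PadicInt.toZModPow d (x.2 ⟨2 * i, by omega⟩)),
     Fin.cons (PadicInt.toZModPow d (x.1 2)) (fun i : Fin m => PadicInt.toZModPow d (x.2 ⟨2 * i + 1, by omega⟩))))

lemma phi_add (m : ℕ) (x y : (Fin 3 → ℤ_[p]) × (Fin (2 * m) → ℤ_[p])) :
    phi d m (x + y) = phi d m x + phi d m y := by
  refine Prod.ext ?_ (Prod.ext (funext fun i => ?_) (funext fun i => ?_))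
  · simp [phi]
  · refine Fin.cases ?_ (fun i => ?_) i
    · simp [phi]; ring
    · simp [phi]
  · refine Fin.cases ?_ (fun i => ?_) i <;> simp [phi]

lemma phi_eq_iff (m : ℕ) (x y : (Fin 3 → ℤ_[p]) × (Fin (2 * m) → ℤ_[p])) :
    (Submodule.Quotient.mk x : ASW.modQuot ((p : ℤ_[p]) ^ d) _) = Submodule.Quotient.mk y ↔
      phi d m x = phi d m y := by
  rw [Submodule.Quotient.eq, Submodule.ideal_span_singleton_smul,
    Submodule.mem_smul_pointwise_iff_exists]
  have e1 : phi d m x = phi d m y ↔ (∀ i, (p : ℤ_[p]) ^ d ∣ x.1 i - y.1 i) ∧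
      (∀ i, (p : ℤ_[p]) ^ d ∣ x.2 i - y.2 i) := by
    simp only [phi, Prod.mk.injEq, Fin.cons_inj]
    simp only [funext_iff, map_neg, neg_inj, tau_eq]
    constructor
    · rintro ⟨h0, ⟨h1, h2⟩, h3, h4⟩
      refine ⟨fun i => by fin_cases i <;> assumption, fun i => ?_⟩
      rcases Nat.even_or_odd' (i : ℕ) with ⟨c, hc | hc⟩
      · have := h2 ⟨c, by omega⟩
        rwa [show i = ⟨2 * c, by omega⟩ from Fin.ext hc]
      · have := h4 ⟨c, by omega⟩
        rwa [show i = ⟨2 * c + 1, by omega⟩ from Fin.ext hc]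
    · rintro ⟨h1, h2⟩
      exact ⟨h1 0, ⟨h1 1, fun i => h2 _⟩, h1 2, fun i => h2 _⟩
  rw [e1]
  constructor
  · rintro ⟨w, _, hw⟩
    refine ⟨fun i => ⟨w.1 i, ?_⟩, fun i => ⟨w.2 i, ?_⟩⟩
    · have := congrFun (congrArg Prod.fst hw) i
      simpa using this.symm
    · have := congrFun (congrArg Prod.snd hw) i
      simpa using this.symm
  · rintro ⟨h1, h2⟩
    choose w1 hw1 using h1
    choose w2 hw2 using h2
    refine ⟨(w1, w2), trivial, ?_⟩
    ext i
    · simp [hw1]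
    · simp [hw2]

lemma phi_surj (m : ℕ) : Function.Surjective (phi (p := p) d m) := by
  rintro ⟨a, f, g⟩
  obtain ⟨s, hs⟩ := (tau_surj (p := p) (d := d)).hasRightInverse
  refine ⟨(![s a, -s (f 0), s (g 0)], fun i => if (i : ℕ) % 2 = 0 then
      s (f ⟨i / 2 + 1, by omega⟩) else s (g ⟨i / 2 + 1, by omega⟩)), ?_⟩
  have h2 : ∀ i : ℕ, (2 * i + 1) / 2 = i := fun i => by omega
  refine Prod.ext ?_ (Prod.ext (funext fun i => ?_) (funext fun i => ?_))
  · simp [phi, hs a]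
  · refine Fin.cases ?_ (fun i => ?_) i
    · simp [phi, hs (f 0)]
    · simp [phi]
      rw [hs]; rfl
  · refine Fin.cases ?_ (fun i => ?_) i
    · simp [phi, hs (g 0)]
    · simp [phi, Nat.add_mod, h2]
      rw [hs]; rfl

lemma phi_Q (m : ℕ) (c : ℤ_[p]) (x : (Fin 3 → ℤ_[p]) × (Fin (2 * m) → ℤ_[p])) :
    PadicInt.toZModPow d (((ASW.delta ℤ_[p] c).prod (ASW.hyp ℤ_[p] m)) x) =
      -(PadicInt.toZModPow d c) * (phi d m x).1 ^ 2 + (phi d m x).2.1 ⬝ᵥ (phi d m x).2.2 := by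
  rw [QuadraticMap.prod_apply, delta_apply, hyp_apply]
  simp [phi, dotProduct, Fin.sum_univ_succ]
  ring

lemma phi_polar (m : ℕ) (c : ℤ_[p]) (x y : (Fin 3 → ℤ_[p]) × (Fin (2 * m) → ℤ_[p])) :
    PadicInt.toZModPow d (QuadraticMap.polar ((ASW.delta ℤ_[p] c).prod (ASW.hyp ℤ_[p] m)) x y) =
      -(2 * PadicInt.toZModPow d c * (phi d m x).1 * (phi d m y).1) +
        ((phi d m x).2.1 ⬝ᵥ (phi d m y).2.2 + (phi d m y).2.1 ⬝ᵥ (phi d m x).2.2) := by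
  rw [QuadraticMap.polar, map_sub, map_sub, phi_Q, phi_Q, phi_Q, phi_add]
  simp only [Prod.fst_add, Prod.snd_add, add_dotProduct, dotProduct_add]
  ring

lemma gram_eq (A B : ℤ_[p]) :
    ASW.gramOf (Matrix.toQuadraticMap' !![A, 0; 0, B]) 0 0 = A ∧
    ASW.gramOf (Matrix.toQuadraticMap' !![A, 0; 0, B]) 1 1 = B ∧
    ASW.gramOf (Matrix.toQuadraticMap' !![A, 0; 0, B]) 0 1 = 0 ∧
    ASW.gramOf (Matrix.toQuadraticMap' !![A, 0; 0, B]) 1 0 = 0 := by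
  refine ⟨?_, ?_, ?_, ?_⟩ <;>
  simp [ASW.gramOf, Matrix.toQuadraticMap', Matrix.toQuadraticForm', LinearMap.BilinMap.toQuadraticMap_apply,
    Matrix.toLinearMap₂'_apply, Fin.sum_univ_two, QuadraticMap.polar]

lemma rep_eq (m : ℕ) (c A B : ℤ_[p]) :
    ASW.repCount (p : ℤ_[p]) d ((ASW.delta ℤ_[p] c).prod (ASW.hyp ℤ_[p] m))
      (ASW.gramOf (Matrix.toQuadraticMap' !![A, 0; 0, B])) =
    Nat.card (Tset p d m (PadicInt.toZModPow d A) (PadicInt.toZModPow d B)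
      (PadicInt.toZModPow d c)) := by
  unfold ASW.repCount ASW.repSet
  rw [card_image_eq _ (fun x : Fin 2 → (Fin 3 → ℤ_[p]) × (Fin (2 * m) → ℤ_[p]) =>
    (phi d m (x 0), phi d m (x 1)))]
  · congr 2
    obtain ⟨g1, g2, g3, g4⟩ := gram_eq (p := p) A B
    ext ⟨z1, z2⟩
    have key : ∀ x : Fin 2 → (Fin 3 → ℤ_[p]) × (Fin (2 * m) → ℤ_[p]),
      x ∈ {x : Fin 2 → (Fin 3 → ℤ_[p]) × (Fin (2 * m) → ℤ_[p]) |
        (∀ j, (p : ℤ_[p]) ^ d ∣ ((ASW.delta ℤ_[p] c).prod (ASW.hyp ℤ_[p] m)) (x j) -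
          ASW.gramOf (Matrix.toQuadraticMap' !![A, 0; 0, B]) j j) ∧
        ∀ j l, j ≠ l → (p : ℤ_[p]) ^ d ∣ QuadraticMap.polar (⇑((ASW.delta ℤ_[p] c).prod (ASW.hyp ℤ_[p] m))) (x j) (x l) - ASW.gramOf (Matrix.toQuadraticMap' !![A, 0; 0, B]) j l} ↔
      (phi d m (x 0), phi d m (x 1)) ∈ Tset p d m (PadicInt.toZModPow d A) (PadicInt.toZModPow d B)
        (PadicInt.toZModPow d c) := by
      intro x
      simp only [Set.mem_setOf_eq, Fin.forall_fin_two, ← tau_eq, g1, g2, g3, g4, phi_Q, phi_polar,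
        map_zero, Tset, ne_eq, not_true_eq_false, false_implies, true_and, and_true]
      constructor
      · rintro ⟨⟨h1, h2⟩, h3, h4⟩
        exact ⟨h1, h2, h3 (by decide)⟩
      · rintro ⟨h1, h2, h3⟩
        refine ⟨⟨h1, h2⟩, fun _ => h3, fun _ => ?_⟩
        linear_combination h3
    constructor
    · rintro ⟨x, hx, h⟩
      rw [← h]
      exact (key x).1 hx
    · intro h
      obtain ⟨x1, rfl⟩ := phi_surj m z1
      obtain ⟨x2, rfl⟩ := phi_surj m z2
      exact ⟨![x1, x2], (key _).2 h, rfl⟩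
  · intro x y
    simp only [funext_iff, Fin.forall_fin_two, phi_eq_iff, Prod.mk.injEq]

lemma isUnit_or_dvd_padic (x : ℤ_[p]) : IsUnit x ∨ (p : ℤ_[p]) ∣ x := by
  by_cases h : IsUnit x
  · exact Or.inl h
  · right
    rwa [← PadicInt.norm_lt_one_iff_dvd, ← PadicInt.not_isUnit_iff]

lemma not_dvd_unit_padic {x : ℤ_[p]} (h : IsUnit x) : ¬ (p : ℤ_[p]) ∣ x := by
  rw [← PadicInt.norm_lt_one_iff_dvd, ← PadicInt.not_isUnit_iff]
  exact fun h' => h' h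

lemma exists_sqrt (hodd : Odd p) (c b : ℤ_[p]) (hb : IsUnit b) (h : (p : ℤ_[p]) ∣ b ^ 2 - c) :
    ∃ s : ℤ_[p], s ^ 2 = c := by
  have h2 : IsUnit (2 : ℤ_[p]) := by
    rcases isUnit_or_dvd_padic (2 : ℤ_[p]) with h | h
    · exact h
    · have h3 : ((p : ℤ) : ℤ_[p]) ∣ ((2 : ℤ) : ℤ_[p]) := by exact_mod_cast h
      have h4 : ‖((2 : ℤ) : ℤ_[p])‖ < 1 := by
        rw [PadicInt.norm_lt_one_iff_dvd]; exact_mod_cast h3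
      rw [PadicInt.norm_int_lt_one_iff_dvd] at h4
      have h5 : p ∣ 2 := by exact_mod_cast h4
      have h6 := (Nat.prime_dvd_prime_iff_eq hp.out Nat.prime_two).1 h5
      rw [h6] at hodd
      exact absurd hodd (by decide)
  have hn : ‖((Polynomial.X ^ 2 - Polynomial.C c : Polynomial ℤ_[p])).aeval b‖ <
      ‖(Polynomial.derivative (Polynomial.X ^ 2 - Polynomial.C c : Polynomial ℤ_[p])).aeval b‖ ^ 2 := by
    have e1 : (Polynomial.derivative (Polynomial.X ^ 2 - Polynomial.C c : Polynomial ℤ_[p])).aeval b = 2 * b := by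
      simp [one_add_one_eq_two]
    rw [e1, PadicInt.isUnit_iff.1 (h2.mul hb), one_pow]
    simpa [PadicInt.norm_lt_one_iff_dvd] using h
  obtain ⟨z, hz, -⟩ := hensels_lemma hn
  exact ⟨z, by simpa [sub_eq_zero] using hz⟩

lemma unit_all (hodd : Odd p) (ε₁ ε₂ n : ℤ_[p]) (hε₁ : IsUnit ε₁) (hε₂ : IsUnit ε₂) (c : ℚ_[p])
    (hc : c = (p : ℚ_[p]) ^ 2 * n)
    (hani : ¬ ∃ f : ((Fin 2 → ℚ_[p]) × ℚ_[p]) →ₗ[ℚ_[p]] Matrix (Fin 2) (Fin 2) ℚ_[p],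
      Function.Injective f ∧
        ∀ v, (f v).det =
          ((Matrix.toQuadraticMap'
              !![(ε₁ : ℚ_[p]) * (p : ℚ_[p]), 0; 0, (ε₂ : ℚ_[p]) * (p : ℚ_[p]) ^ 2]).prod
            (c • QuadraticMap.sq)) v) (b : ℤ_[p]) :
    IsUnit (ε₂ + n * b ^ 2) := by
  rcases isUnit_or_dvd_padic (ε₂ + n * b ^ 2) with h | h
  · exact h
  exfalso
  have hnb : IsUnit (n * b ^ 2) := by
    rcases isUnit_or_dvd_padic (n * b ^ 2) with h' | h'
    · exact h'
    · exact absurd ((dvd_add_left h').1 h) (not_dvd_unit_padic hε₂)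
  have hnu : IsUnit n := isUnit_of_mul_isUnit_left hnb
  have hbu : IsUnit b := (isUnit_pow_iff (by norm_num)).1 (isUnit_of_mul_isUnit_right hnb)
  obtain ⟨e, rfl⟩ := hε₂
  obtain ⟨b', rfl⟩ := hbu
  obtain ⟨s, hs⟩ := exists_sqrt hodd (-n * ((e⁻¹ : ℤ_[p]ˣ) : ℤ_[p])) ((b'⁻¹ : ℤ_[p]ˣ) : ℤ_[p])
    (Units.isUnit _) (by
      have := h.mul_left (((b'⁻¹ : ℤ_[p]ˣ) : ℤ_[p]) ^ 2 * ((e⁻¹ : ℤ_[p]ˣ) : ℤ_[p]))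
      convert this using 1
      have h1 : ((b'⁻¹ : ℤ_[p]ˣ) : ℤ_[p]) * b' = 1 := Units.inv_mul _
      have h2 : ((e⁻¹ : ℤ_[p]ˣ) : ℤ_[p]) * e = 1 := Units.inv_mul _
      linear_combination (-((b'⁻¹ : ℤ_[p]ˣ) : ℤ_[p]) ^ 2) * h2 -
        (n * ((e⁻¹ : ℤ_[p]ˣ) : ℤ_[p])) * (((b'⁻¹ : ℤ_[p]ˣ) : ℤ_[p]) * b' + 1) * h1)
  have hn : n = -(e : ℤ_[p]) * s ^ 2 := by
    rw [hs]
    have h2 : ((e⁻¹ : ℤ_[p]ˣ) : ℤ_[p]) * e = 1 := Units.inv_mul _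
    linear_combination -n * h2
  have hp0 : (p : ℚ_[p]) ≠ 0 := by exact_mod_cast hp.out.ne_zero
  have he0 : ((e : ℤ_[p]) : ℚ_[p]) ≠ 0 := by
    rw [PadicInt.coe_ne_zero]; exact e.ne_zero
  have hs0 : (s : ℚ_[p]) ≠ 0 := by
    rw [PadicInt.coe_ne_zero]
    rintro rfl
    rw [hn] at hnu
    simp at hnu
  apply hani
  let f : ((Fin 2 → ℚ_[p]) × ℚ_[p]) →ₗ[ℚ_[p]] Matrix (Fin 2) (Fin 2) ℚ_[p] :=
    { toFun := fun v => !![v.1 0, -((p : ℚ_[p]) ^ 2 * (e : ℤ_[p])) * (v.1 1 - s * v.2);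
          v.1 1 + s * v.2, (ε₁ : ℚ_[p]) * p * v.1 0]
      map_add' := by
        intro v w
        ext i j
        fin_cases i <;> fin_cases j <;> simp <;> ring
      map_smul' := by
        intro r v
        ext i j
        fin_cases i <;> fin_cases j <;> simp <;> ring }
  have hf : ∀ v, f v = !![v.1 0, -((p : ℚ_[p]) ^ 2 * (e : ℤ_[p])) * (v.1 1 - s * v.2);
          v.1 1 + s * v.2, (ε₁ : ℚ_[p]) * p * v.1 0] := fun _ => rfl
  refine ⟨f, ?_, ?_⟩
  · rw [injective_iff_map_eq_zero]
    intro v hv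
    rw [hf] at hv
    have h00 := congrFun (congrFun hv 0) 0
    have h01 := congrFun (congrFun hv 0) 1
    have h10 := congrFun (congrFun hv 1) 0
    simp [hp0, he0] at h00 h01 h10
    have hv1 : v.1 1 = 0 := by linear_combination (h01 + h10) / 2
    have hv2 : v.2 = 0 := by
      rw [hv1] at h10
      simpa [hs0] using h10
    ext i
    · fin_cases i
      · exact h00
      · exact hv1
    · exact hv2
  · intro v
    rw [hf, Matrix.det_fin_two_of, hc, hn]
    simp [Matrix.toQuadraticMap', Matrix.toQuadraticForm', LinearMap.BilinMap.toQuadraticMap_apply,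
      Matrix.toLinearMap₂'_apply, Fin.sum_univ_two]
    ring

end
end S16

/-- Let `p` be an odd prime, `O = ℤ_p`, `q = p`.  Let `M = ℤ_p²` with
`Q(x, y) = ε₁·p·x² + ε₂·p²·y²` (`ε₁, ε₂ ∈ ℤ_p^×`), and `N = p^{2k}·N₀` with `ν_p(N₀) ∈ {0,1}`
(i.e. `p² ∤ N₀`) and `k ≥ 1`; assume `(M ⊥ ⟨N⟩) ⊗ ℚ_p` is not isometric to a subspace of
`(M₂(ℚ_p), det)`.  If `P` is a real polynomial interpolating the local densities of `M` in
`δ(N) ⊥ H⁺_{2m}` (with the normalizing factor `1 - p^{-1-m}`, and `4m+3` the generic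
dimension of the representation scheme), then
`P(X) = 1 + pX + (p-1)X² - pX³ - pX⁴`; in particular `-P′(1) = 4p + 2`. -/
theorem statement16 (p : ℕ) [Fact p.Prime] (hodd : Odd p)
    (ε₁ ε₂ : ℤ_[p]) (hε₁ : IsUnit ε₁) (hε₂ : IsUnit ε₂)
    (k : ℕ) (hk : 1 ≤ k) (N₀ : ℤ_[p]) (hN₀ : ¬ (p : ℤ_[p]) ^ 2 ∣ N₀)
    (hani : ¬ ∃ f : ((Fin 2 → ℚ_[p]) × ℚ_[p]) →ₗ[ℚ_[p]] Matrix (Fin 2) (Fin 2) ℚ_[p],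
      Function.Injective f ∧
        ∀ v, (f v).det =
          ((Matrix.toQuadraticMap'
              !![(ε₁ : ℚ_[p]) * (p : ℚ_[p]), 0; 0, (ε₂ : ℚ_[p]) * (p : ℚ_[p]) ^ 2]).prod
            (((p : ℚ_[p]) ^ (2 * k) * (N₀ : ℚ_[p])) • QuadraticMap.sq)) v)
    (P : Polynomial ℝ)
    (hP : ∀ m : ℕ, Filter.Tendsto
      (fun d : ℕ =>
        (ASW.repCount (p : ℤ_[p]) d
            ((ASW.delta ℤ_[p] ((p : ℤ_[p]) ^ (2 * k) * N₀)).prod (ASW.hyp ℤ_[p] m))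
            (ASW.gramOf (Matrix.toQuadraticMap'
              !![ε₁ * (p : ℤ_[p]), 0; 0, ε₂ * (p : ℤ_[p]) ^ 2])) : ℝ) /
          (p : ℝ) ^ (d * (4 * m + 3)))
      Filter.atTop
      (nhds (P.eval (((p : ℝ)⁻¹) ^ m) * (1 - ((p : ℝ)⁻¹) ^ (m + 1))))) :
    P = Polynomial.C 1 + Polynomial.C (p : ℝ) * Polynomial.X +
        Polynomial.C ((p : ℝ) - 1) * Polynomial.X ^ 2 -
        Polynomial.C (p : ℝ) * Polynomial.X ^ 3 - Polynomial.C (p : ℝ) * Polynomial.X ^ 4 ∧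
      -(P.derivative.eval 1) = 4 * (p : ℝ) + 2 := by
  have hp : p.Prime := Fact.out
  have hp0 : (p : ℝ) ≠ 0 := by exact_mod_cast hp.ne_zero
  have hp1 : (1 : ℝ) < p := by exact_mod_cast hp.one_lt
  obtain ⟨k', rfl⟩ := Nat.exists_eq_add_of_le hk
  set n : ℤ_[p] := (p : ℤ_[p]) ^ (2 * k') * N₀ with hn
  have hN : (p : ℤ_[p]) ^ (2 * (1 + k')) * N₀ = p ^ 2 * n := by rw [hn]; ring
  have hu := S16.unit_all hodd ε₁ ε₂ n hε₁ hε₂ _ (by rw [hn]; push_cast; ring) hani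
  have hval : ∀ m : ℕ, P.eval (((p : ℝ)⁻¹) ^ m) =
      (Polynomial.C 1 + Polynomial.C (p : ℝ) * Polynomial.X +
        Polynomial.C ((p : ℝ) - 1) * Polynomial.X ^ 2 -
        Polynomial.C (p : ℝ) * Polynomial.X ^ 3 -
        Polynomial.C (p : ℝ) * Polynomial.X ^ 4).eval (((p : ℝ)⁻¹) ^ m) := by
    intro m
    have hlim := hP m
    have hev : Filter.Tendsto (fun d : ℕ =>
        (ASW.repCount (p : ℤ_[p]) d
            ((ASW.delta ℤ_[p] ((p : ℤ_[p]) ^ (2 * (1 + k')) * N₀)).prod (ASW.hyp ℤ_[p] m))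
            (ASW.gramOf (Matrix.toQuadraticMap'
              !![ε₁ * (p : ℤ_[p]), 0; 0, ε₂ * (p : ℤ_[p]) ^ 2])) : ℝ) /
          (p : ℝ) ^ (d * (4 * m + 3))) Filter.atTop
        (nhds ((1 - ((p : ℝ)⁻¹) ^ (m + 1)) * (1 + ((p : ℝ)⁻¹) ^ m) * (1 - ((p : ℝ)⁻¹) ^ m) *
        (1 + p * ((p : ℝ)⁻¹) ^ m + p * (((p : ℝ)⁻¹) ^ m) ^ 2))) := by
      refine tendsto_const_nhds.congr' ?_
      filter_upwards [Filter.eventually_ge_atTop 3] with d hd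
      rw [S16.rep_eq, hN]
      have := S16.T_count (p := p) (d := d) (m := m) hd (PadicInt.toZModPow d ε₁)
        (PadicInt.toZModPow d ε₂) (PadicInt.toZModPow d n) (hε₁.map _) (by
          intro b
          obtain ⟨b, rfl⟩ := S16.tau_surj b
          have := (hu b).map (PadicInt.toZModPow d)
          simpa using this)
      rw [← this]
      simp [mul_comm]
    have heq := tendsto_nhds_unique hlim hev
    have hne : (1 - ((p : ℝ)⁻¹) ^ (m + 1)) ≠ 0 := by
      have : ((p : ℝ)⁻¹) ^ (m + 1) < 1 :=
        pow_lt_one₀ (by positivity) (inv_lt_one_of_one_lt₀ hp1) (by omega)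
      linarith
    apply mul_right_cancel₀ hne
    rw [heq]
    simp only [Polynomial.eval_add, Polynomial.eval_sub, Polynomial.eval_mul, Polynomial.eval_pow,
      Polynomial.eval_C, Polynomial.eval_X]
    ring
  have hmain : P = Polynomial.C 1 + Polynomial.C (p : ℝ) * Polynomial.X +
        Polynomial.C ((p : ℝ) - 1) * Polynomial.X ^ 2 -
        Polynomial.C (p : ℝ) * Polynomial.X ^ 3 - Polynomial.C (p : ℝ) * Polynomial.X ^ 4 := by
    apply Polynomial.eq_of_infinite_eval_eq
    refine Set.Infinite.mono (s := Set.range fun m : ℕ => ((p : ℝ)⁻¹) ^ m) ?_ ?_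
    · rintro _ ⟨m, rfl⟩
      exact hval m
    · apply Set.infinite_range_of_injective
      exact pow_right_injective₀ (by positivity) (inv_lt_one_of_one_lt₀ hp1).ne
  refine ⟨hmain, ?_⟩
  rw [hmain]
  simp
  ring
end
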